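/- arXiv:2511.22196 — 2 statements merged into one kernel-verified Lean document; each statement's English description precedes it below -/
import Mathlib

section
/- Every graph G with maximum degree at most 3 has an optimal tree-decomposition (of width tw(G)) in which every bag B satisfies tw(G[B]) ≤ 3. -/
open SimpleGraph

/-- A (finite) tree-decomposition of a graph `G`: a nonempty finite tree `tree` on node
type `ι` with bags `bag x ⊆ V(G)` such that every edge of `G` lies in some bag and for
each vertex `v` the set of nodes whose bags contain `v` induces a nonempty connected
subtree. -/
structure TreeDecomp {V : Type*} (G : SimpleGraph V) where
  ι : Type
  fint : Fintype ι
  nonempty : Nonempty ι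
  tree : SimpleGraph ι
  isTree : tree.IsTree
  bag : ι → Finset V
  edge_mem : ∀ ⦃v w : V⦄, G.Adj v w → ∃ x, v ∈ bag x ∧ w ∈ bag x
  support_conn : ∀ v : V, (tree.induce {x : ι | v ∈ bag x}).Connected

/-- The tree-decomposition has width at most `w`. -/
def TreeDecomp.widthLE {V : Type*} {G : SimpleGraph V} (D : TreeDecomp G) (w : ℕ) : Prop :=
  ∀ x : D.ι, (D.bag x).card ≤ w + 1

/-- The treewidth of `G`: minimum width over all tree-decompositions. -/
noncomputable def treewidth {V : Type*} (G : SimpleGraph V) : ℕ :=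
  sInf {w : ℕ | ∃ D : TreeDecomp G, D.widthLE w}

/-- A tree-decomposition is normal if no bag is contained in the bag of an adjacent node. -/
def TreeDecomp.Normal {V : Type*} {G : SimpleGraph V} (D : TreeDecomp G) : Prop :=
  ∀ ⦃x y : D.ι⦄, D.tree.Adj x y → ¬ D.bag x ⊆ D.bag y

/-!
If a bag `B` contains the closed neighbourhood `N[v]` of a vertex `v`, then `v` can be deleted from
all bags and a new leaf with bag `N[v]` attached to `B`. When `N[v] ≠ B`, this replaces `B` by two
strictly smaller bags and enlarges no other bag, so it can be repeated only finitely often. Hence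
some optimal tree-decomposition has the property that `N[v] ⊆ B` forces `B = N[v]`. A bag with at
least five vertices, all of degree at most 3, then omits a neighbour of each of its vertices, and so
induces a subgraph of maximum degree at most 2. Such a graph has treewidth at most 2, since
eliminating its vertices one by one never increases a degree.
-/

section AttachLeaf

variable {ι : Type*} {T : SimpleGraph ι}

/-- The graph obtained from `T` by attaching a new vertex `none` to the vertex `x` by an edge. -/
def attachLeaf (T : SimpleGraph ι) (x : ι) : SimpleGraph (Option ι) :=
  T.map Function.Embedding.some ⊔ edge none (some x)

/-- The inclusion of `T` into `attachLeaf T x`. -/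
def attachLeafHom (T : SimpleGraph ι) (x : ι) : T →g attachLeaf T x where
  toFun := some
  map_rel' h := Or.inl ((map_adj_apply (f := Function.Embedding.some)).2 h)

lemma attachLeaf_adj_some_none (T : SimpleGraph ι) (x : ι) :
    (attachLeaf T x).Adj (some x) none :=
  Or.inr (by simp [edge_adj])

lemma connected_induce_attachLeaf {x : ι} {R : Set ι} {S : Set (Option ι)}
    (hR : (T.induce R).Connected) (hRS : ∀ y, some y ∈ S ↔ y ∈ R) (hx : none ∈ S → x ∈ R) :
    ((attachLeaf T x).induce S).Connected := by
  let f : T.induce R →g (attachLeaf T x).induce S :=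
    induceHom (attachLeafHom T x) fun y => (hRS y).2
  obtain ⟨s⟩ := hR.nonempty
  refine connected_iff_exists_forall_reachable _ |>.2 ⟨f s, ?_⟩
  rintro ⟨_ | y, hy⟩
  · have hadj : ((attachLeaf T x).induce S).Adj (f ⟨x, hx hy⟩) ⟨none, hy⟩ :=
      attachLeaf_adj_some_none T x
    exact ((hR.preconnected s ⟨x, hx hy⟩).map f).trans hadj.reachable
  · exact (hR.preconnected s ⟨y, (hRS y).1 hy⟩).map f

lemma edgeSet_attachLeaf (T : SimpleGraph ι) (x : ι) :
    (attachLeaf T x).edgeSet =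
      insert s(none, some x) (Function.Embedding.some.sym2Map '' T.edgeSet) := by
  rw [attachLeaf, edgeSet_sup, edgeSet_map, edgeSet_edge_of_ne (Option.some_ne_none x).symm,
    Set.union_comm, Set.singleton_union]

lemma isTree_attachLeaf [Finite ι] (hT : T.IsTree) (x : ι) : (attachLeaf T x).IsTree := by
  obtain ⟨hconn, hcard⟩ := isTree_iff_connected_and_card.1 hT
  refine isTree_iff_connected_and_card.2 ⟨?_, ?_⟩
  · rw [← (induceUnivIso _).connected_iff] at hconn ⊢
    exact connected_induce_attachLeaf hconn (by simp) fun _ => Set.mem_univ _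
  · have hnew : s(none, some x) ∉ Function.Embedding.some.sym2Map '' T.edgeSet := by
      rintro ⟨⟨a, b⟩, -, h⟩
      simp at h
    rw [Nat.card_coe_set_eq] at hcard ⊢
    rw [edgeSet_attachLeaf, Set.ncard_insert_of_notMem hnew (Set.toFinite _),
      Set.ncard_image_of_injective _ (Function.Embedding.injective _), hcard, Finite.card_option]

end AttachLeaf

namespace TreeDecomp

variable {V : Type*} {G H : SimpleGraph V}

instance (D : TreeDecomp G) : Fintype D.ι := D.fint

/-- The tree-decomposition with a single bag, containing all vertices. -/
def singleBag [Fintype V] (G : SimpleGraph V) : TreeDecomp G where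
  ι := Unit
  fint := inferInstance
  nonempty := inferInstance
  tree := ⊥
  isTree := .of_subsingleton
  bag _ := Finset.univ
  edge_mem _ _ _ := ⟨(), Finset.mem_univ _, Finset.mem_univ _⟩
  support_conn v :=
    have : Nonempty {_x : Unit | v ∈ Finset.univ} := ⟨(), Finset.mem_univ v⟩
    .of_subsingleton

lemma widthLE_singleBag [Fintype V] {w : ℕ} (h : Fintype.card V ≤ w + 1) :
    (singleBag G).widthLE w :=
  fun _ => h

lemma exists_subset_bag_of_isClique (D : TreeDecomp G) {s : Finset V} (hs : G.IsClique s)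
    (hcard : s.card ≤ 2) : ∃ x, s ⊆ D.bag x := by
  classical
  interval_cases h : s.card
  · obtain ⟨x⟩ := D.nonempty
    exact ⟨x, by simp [Finset.card_eq_zero.1 h]⟩
  · obtain ⟨a, rfl⟩ := Finset.card_eq_one.1 h
    obtain ⟨x, hx⟩ := (D.support_conn a).nonempty
    exact ⟨x, Finset.singleton_subset_iff.2 hx⟩
  · obtain ⟨a, b, hab, rfl⟩ := Finset.card_eq_two.1 h
    obtain ⟨x, ha, hb⟩ := D.edge_mem (hs (by simp) (by simp) hab)
    exact ⟨x, by simp [Finset.insert_subset_iff, ha, hb]⟩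

section SplitOff

variable [DecidableEq V] {v : V} [Fintype (G.neighborSet v)]

/-- The tree-decomposition of `G` obtained from one of `H` by deleting `v` from all bags and
attaching to the node `x` a leaf with bag `N[v]`. The graphs `G` and `H` may differ, as long as all
edges of `G` not incident to `v` are edges of `H`. -/
def splitOff (D : TreeDecomp H) {x : D.ι} (hGH : G.deleteIncidenceSet v ≤ H)
    (hx : G.neighborFinset v ⊆ D.bag x) : TreeDecomp G where
  ι := Option D.ι
  fint := inferInstance
  nonempty := inferInstance
  tree := attachLeaf D.tree x
  isTree := isTree_attachLeaf D.isTree x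
  bag y := y.elim (insert v (G.neighborFinset v)) fun y => (D.bag y).erase v
  edge_mem a b hab := by
    by_cases ha : a = v
    · subst ha
      exact ⟨none, by simp, by simp [hab]⟩
    by_cases hb : b = v
    · subst hb
      exact ⟨none, by simp [hab.symm], by simp⟩
    obtain ⟨y, hay, hby⟩ := D.edge_mem (hGH (deleteIncidenceSet_adj.2 ⟨hab, ha, hb⟩))
    exact ⟨some y, by simp [ha, hay], by simp [hb, hby]⟩
  support_conn u := by
    by_cases hu : u = v
    · subst hu
      refine connected_iff_exists_forall_reachable _ |>.2 ⟨⟨none, by simp⟩, ?_⟩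
      rintro ⟨_ | y, hy⟩
      · exact .refl _
      · simp at hy
    · refine connected_induce_attachLeaf (D.support_conn u) (by simp [hu]) fun hnone => hx ?_
      simpa [hu] using hnone

lemma widthLE_splitOff {w : ℕ} {D : TreeDecomp H} (hD : D.widthLE w) {x : D.ι}
    (hGH : G.deleteIncidenceSet v ≤ H) (hx : G.neighborFinset v ⊆ D.bag x)
    (hv : G.degree v ≤ w) : (D.splitOff hGH hx).widthLE w
  | none => (Finset.card_insert_le _ _).trans (Nat.succ_le_succ hv)
  | some y => Finset.card_erase_le.trans (hD y)

end SplitOff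

/-- The potential of a tree-decomposition: it decreases whenever a bag is replaced by two strictly
smaller ones, because `2 * 3 ^ (n - 1) < 3 ^ n`. -/
def potential (D : TreeDecomp G) : ℕ :=
  ∑ x, 3 ^ (D.bag x).card

lemma potential_splitOff_lt [DecidableEq V] {v : V} [Fintype (G.neighborSet v)] (D : TreeDecomp G)
    {x : D.ι} (hv : v ∈ D.bag x) (hx : G.neighborFinset v ⊆ D.bag x)
    (hcard : G.degree v + 1 < (D.bag x).card) :
    (D.splitOff (G.deleteIncidenceSet_le v) hx).potential < D.potential := by
  classical
  have hnew : (insert v (G.neighborFinset v)).card ≤ (D.bag x).card - 1 :=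
    (Finset.card_insert_le _ _).trans (Nat.le_sub_one_of_lt hcard)
  have hdrop : 3 ^ (insert v (G.neighborFinset v)).card + 3 ^ ((D.bag x).erase v).card <
      3 ^ (D.bag x).card := by
    have hpow := Nat.pow_le_pow_right (n := 3) (by norm_num) hnew
    have hpos : 0 < 3 ^ ((D.bag x).card - 1) := by positivity
    rw [Finset.card_erase_of_mem hv, ← Nat.sub_add_cancel (show 1 ≤ (D.bag x).card by omega),
      pow_succ, Nat.add_sub_cancel]
    omega
  have hrest : ∑ y ∈ Finset.univ.erase x, 3 ^ ((D.bag y).erase v).card ≤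
      ∑ y ∈ Finset.univ.erase x, 3 ^ (D.bag y).card :=
    Finset.sum_le_sum fun y _ => Nat.pow_le_pow_right (by norm_num) Finset.card_erase_le
  calc (D.splitOff (G.deleteIncidenceSet_le v) hx).potential
      = 3 ^ (insert v (G.neighborFinset v)).card + ∑ y, 3 ^ ((D.bag y).erase v).card :=
        Fintype.sum_option _
    _ < ∑ y, 3 ^ (D.bag y).card := by
        rw [← Finset.add_sum_erase _ _ (Finset.mem_univ x),
          ← Finset.add_sum_erase Finset.univ (fun y => 3 ^ (D.bag y).card) (Finset.mem_univ x)]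
        omega

lemma exists_widthLE_forall_card_bag_le_degree_add_one [G.LocallyFinite] {w : ℕ}
    {D : TreeDecomp G} (hD : D.widthLE w) :
    ∃ D' : TreeDecomp G, D'.widthLE w ∧ ∀ x, ∀ v ∈ D'.bag x,
      G.neighborFinset v ⊆ D'.bag x → (D'.bag x).card ≤ G.degree v + 1 := by
  classical
  obtain ⟨D', hD', hmin⟩ := exists_minimalFor_of_wellFoundedLT
    (fun D : TreeDecomp G => D.widthLE w) potential ⟨D, hD⟩
  refine ⟨D', hD', fun x v hv hx => ?_⟩
  by_contra! hcard
  have hlt := D'.potential_splitOff_lt hv hx hcard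
  have hdeg : G.degree v ≤ w := by
    have := hD' x
    omega
  exact hlt.not_ge (hmin (widthLE_splitOff hD' _ hx hdeg) hlt.le)

end TreeDecomp

section Eliminate

variable {V : Type*} (G : SimpleGraph V) (v : V)

/-- The elimination of `v` from `G`: the edges at `v` are deleted and the neighbours of `v` are made
pairwise adjacent. The vertex `v` itself is kept, as an isolated vertex. -/
def eliminate : SimpleGraph V :=
  G.deleteIncidenceSet v ⊔ (⊤ : SimpleGraph (G.neighborSet v)).spanningCoe

variable {G v}

lemma eliminate_adj {a b : V} : (eliminate G v).Adj a b ↔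
    (G.Adj a b ∧ a ≠ v ∧ b ≠ v) ∨ (G.Adj v a ∧ G.Adj v b ∧ a ≠ b) := by
  simp [eliminate, deleteIncidenceSet_adj, and_assoc, and_comm, and_left_comm]

lemma isClique_eliminate_neighborSet : (eliminate G v).IsClique (G.neighborSet v) :=
  fun _ ha _ hb hab => eliminate_adj.2 (Or.inr ⟨ha, hb, hab⟩)

lemma degree_eliminate_le [G.LocallyFinite] [(eliminate G v).LocallyFinite] (hv : G.degree v ≤ 2)
    (u : V) : (eliminate G v).degree u ≤ G.degree u := by
  classical
  simp only [← card_neighborFinset_eq_degree] at hv ⊢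
  by_cases hvu : G.Adj v u
  · have hsub : (eliminate G v).neighborFinset u ⊆
        (G.neighborFinset u).erase v ∪ (G.neighborFinset v).erase u := by
      intro a ha
      rw [mem_neighborFinset, eliminate_adj] at ha
      simp only [Finset.mem_union, Finset.mem_erase, mem_neighborFinset]
      tauto
    have hcard := (Finset.card_le_card hsub).trans (Finset.card_union_le _ _)
    have hu : v ∈ G.neighborFinset u := by simpa using hvu.symm
    rw [Finset.card_erase_of_mem hu,
      Finset.card_erase_of_mem ((G.mem_neighborFinset v u).2 hvu)] at hcard
    have hpos := Finset.card_pos.2 ⟨v, hu⟩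
    omega
  · refine Finset.card_le_card fun a ha => ?_
    rw [mem_neighborFinset, eliminate_adj] at ha
    rw [mem_neighborFinset]
    tauto

end Eliminate

section Treewidth

variable {V : Type*} {G : SimpleGraph V}

lemma treewidth_le {D : TreeDecomp G} {w : ℕ} (hD : D.widthLE w) : treewidth G ≤ w :=
  Nat.sInf_le ⟨D, hD⟩

lemma exists_widthLE_treewidth [Finite V] (G : SimpleGraph V) :
    ∃ D : TreeDecomp G, D.widthLE (treewidth G) :=
  have := Fintype.ofFinite V
  Nat.sInf_mem (s := {w | ∃ D : TreeDecomp G, D.widthLE w})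
    ⟨Fintype.card V, .singleBag G, TreeDecomp.widthLE_singleBag (Nat.le_succ _)⟩

/-- Here `S` is the set of vertices eliminated so far: each bag still meeting `S` arose from the
closed neighbourhood of one of them. -/
lemma exists_treeDecomp_disjoint_bag_or_card_bag_le_three [Finite V] [G.LocallyFinite]
    (hG : ∀ v, G.degree v ≤ 2) (S : Finset V) :
    ∃ D : TreeDecomp G, ∀ x, Disjoint (D.bag x) S ∨ (D.bag x).card ≤ 3 := by
  classical
  have := Fintype.ofFinite V
  induction S using Finset.induction_on generalizing G with
  | empty => exact ⟨.singleBag G, fun _ => .inl (Finset.disjoint_empty_right _)⟩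
  | insert v S _ ih =>
    obtain ⟨D, hD⟩ := ih (G := eliminate G v) fun u => (degree_eliminate_le (hG v) u).trans (hG u)
    obtain ⟨x, hx⟩ := D.exists_subset_bag_of_isClique (s := G.neighborFinset v)
      (by simpa using isClique_eliminate_neighborSet) (hG v)
    refine ⟨D.splitOff le_sup_left hx, ?_⟩
    rintro (_ | y)
    · exact .inr ((Finset.card_insert_le _ _).trans (Nat.succ_le_succ (hG v)))
    · refine (hD y).imp (fun hdisj => ?_) Finset.card_erase_le.trans
      exact Finset.disjoint_insert_right.2
        ⟨Finset.notMem_erase _ _, hdisj.mono_left (Finset.erase_subset _ _)⟩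

theorem treewidth_le_two_of_forall_degree_le_two [Finite V] [G.LocallyFinite]
    (hG : ∀ v, G.degree v ≤ 2) : treewidth G ≤ 2 := by
  have := Fintype.ofFinite V
  obtain ⟨D, hD⟩ := exists_treeDecomp_disjoint_bag_or_card_bag_le_three hG Finset.univ
  refine treewidth_le (D := D) fun x => (hD x).elim (fun hdisj => ?_) id
  simp [disjoint_top.1 hdisj]

lemma degree_induce_lt {s : Set V} {v : s} [Fintype (G.neighborSet v)]
    [Fintype ((G.induce s).neighborSet v)] (h : ¬ G.neighborSet v ⊆ s) :
    (G.induce s).degree v < G.degree v := by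
  obtain ⟨u, hvu, hu⟩ := Set.not_subset.1 h
  rw [← card_neighborFinset_eq_degree, ← card_neighborFinset_eq_degree,
    ← Finset.card_map (.subtype (· ∈ s))]
  refine Finset.card_lt_card (Finset.ssubset_iff_of_subset ?_ |>.2 ⟨u, by simpa using hvu, ?_⟩)
  · intro a
    simp +contextual
  · simp [hu]

end Treewidth

theorem maxdeg3_optimal_decomp_general {V : Type*} [Finite V] (G : SimpleGraph V)
    [G.LocallyFinite] :
    ∃ D : TreeDecomp G, D.widthLE (treewidth G) ∧
      ∀ x : D.ι, (∀ v ∈ D.bag x, G.degree v ≤ 3) →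
        treewidth (G.induce (D.bag x : Set V)) ≤ 3 := by
  classical
  obtain ⟨D₀, hD₀⟩ := exists_widthLE_treewidth G
  obtain ⟨D, hD, hbag⟩ := TreeDecomp.exists_widthLE_forall_card_bag_le_degree_add_one hD₀
  refine ⟨D, hD, fun x hdeg => ?_⟩
  by_cases hcard : (D.bag x).card ≤ 4
  · exact treewidth_le (TreeDecomp.widthLE_singleBag (by simpa using hcard))
  · refine (treewidth_le_two_of_forall_degree_le_two fun v => ?_).trans (by norm_num)
    have hv := hdeg v v.2
    have hout : ¬ G.neighborSet v ⊆ D.bag x := fun hsub => by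
      have := hbag x v v.2 (by rwa [← Finset.coe_subset, coe_neighborFinset])
      omega
    have := degree_induce_lt hout
    omega

/-- Every graph with maximum degree at most 3 has an optimal tree-decomposition (of
width `tw(G)`) in which every bag `B` satisfies `tw(G[B]) ≤ 3`. -/
theorem maxdeg3_optimal_decomp {V : Type*} [Fintype V] (G : SimpleGraph V)
    [DecidableRel G.Adj] (hΔ : ∀ v : V, G.degree v ≤ 3) :
    ∃ D : TreeDecomp G, D.widthLE (treewidth G) ∧
      ∀ x : D.ι, treewidth (G.induce ((D.bag x : Set V))) ≤ 3 := by
  obtain ⟨D, hD, hbag⟩ := maxdeg3_optimal_decomp_general G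
  exact ⟨D, hD, fun x => hbag x fun v _ => hΔ v⟩
end

section
/- For any apex-forest H with |V(H)| ≥ 2, every H-minor-free graph has treewidth at most |V(H)| − 2. In particular, every K_{2,n}-minor-free graph has treewidth at most n. -/
open SimpleGraph

/-- `H` is a minor of `G`, via branch sets. -/
def IsMinor {W V : Type*} (H : SimpleGraph W) (G : SimpleGraph V) : Prop :=
  ∃ B : W → Set V,
    (∀ w, (B w).Nonempty) ∧
    (∀ w₁ w₂, w₁ ≠ w₂ → Disjoint (B w₁) (B w₂)) ∧
    (∀ w, (G.induce (B w)).Connected) ∧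
    ∀ ⦃w₁ w₂ : W⦄, H.Adj w₁ w₂ → ∃ v₁ ∈ B w₁, ∃ v₂ ∈ B w₂, G.Adj v₁ v₂

/-!
If every bramble of `G` had a cover of size less than `|V(H)|`, tree-width duality would give a
tree-decomposition of width at most `|V(H)| - 2`; so suppose some bramble has no such cover, and let
`H - v` be a forest. The forest is built leaf by leaf outside a large connected core `C`, keeping
`∂C` equal to a set of roots, one in each branch set, and minimal among the boundaries of large
subsets of `C`. A new vertex is placed on a vertex `y` of `C` next to the root of its only
neighbour. If this destroys minimality, some large `C' ⊆ C \ {y}` has a boundary of the old size,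
and Menger's theorem moves the roots to `∂C'`. When the forest is complete, `C` touches every branch
set and is the branch set of `v`.
-/

section Connectivity

variable {V : Type*} {G : SimpleGraph V} {C D P R : Set V} {a b : V}

theorem subset_of_connected_of_adj_closed (hP : (G.induce P).Connected) (haP : a ∈ P) (haR : a ∈ R)
    (hR : ∀ u ∈ P, u ∈ R → ∀ v ∈ P, G.Adj u v → v ∈ R) : P ⊆ R := by
  intro b hb
  by_contra hbR
  obtain ⟨p⟩ := hP.preconnected ⟨a, haP⟩ ⟨b, hb⟩
  obtain ⟨d, -, hfst, hsnd⟩ := p.exists_boundary_dart {x | (x : V) ∈ R} haR hbR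
  exact hsnd (hR _ d.fst.2 hfst _ d.snd.2 d.adj)

theorem exists_adj_of_connected (hP : (G.induce P).Connected) (haP : a ∈ P) (haR : a ∈ R)
    (hbP : b ∈ P) (hbR : b ∉ R) : ∃ u ∈ P ∩ R, ∃ v ∈ P \ R, G.Adj u v := by
  by_contra! h
  exact hbR (subset_of_connected_of_adj_closed hP haP haR
    (fun u hu huR v hv huv => by_contra fun hvR => h u ⟨hu, huR⟩ v ⟨hv, hvR⟩ huv) hbP)

theorem connected_induce_image {W : Type*} {H : SimpleGraph W} (f : G →g H)
    (hP : (G.induce P).Connected) : (H.induce (f '' P)).Connected :=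
  hP.map (induceHom f (Set.mapsTo_image f P)) (by rintro ⟨_, x, hx, rfl⟩; exact ⟨⟨x, hx⟩, rfl⟩)

theorem connected_induce_singleton (a : V) : (G.induce {a}).Connected := Connected.of_subsingleton

variable (G C D a) in
/-- The vertex set of the component of `a` in `G[D]`, as the union of all connected subsets of `D`
through `a`; it is empty when `a ∉ D`. -/
def componentIn : Set V := ⋃₀ {P | P ⊆ D ∧ (G.induce P).Connected ∧ a ∈ P}

theorem componentIn_subset : componentIn G D a ⊆ D := Set.sUnion_subset fun _ h => h.1

theorem subset_componentIn (hPD : P ⊆ D) (hP : (G.induce P).Connected) (ha : a ∈ P) :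
    P ⊆ componentIn G D a :=
  Set.subset_sUnion_of_mem ⟨hPD, hP, ha⟩

theorem mem_componentIn_self (ha : a ∈ D) : a ∈ componentIn G D a :=
  subset_componentIn (Set.singleton_subset_iff.2 ha) (connected_induce_singleton a) rfl rfl

theorem connected_componentIn (ha : a ∈ D) : (G.induce (componentIn G D a)).Connected :=
  induce_connected_of_patches a (mem_componentIn_self ha) fun {_} ⟨P, hP, hb⟩ =>
    ⟨P, Set.subset_sUnion_of_mem hP, hP.2.2, hb, hP.2.1.preconnected _ _⟩

theorem componentIn_adj_closed {u v : V} (hu : u ∈ componentIn G D a) (hv : v ∈ D)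
    (huv : G.Adj u v) : v ∈ componentIn G D a := by
  obtain ⟨P, ⟨hPD, hP, haP⟩, huP⟩ := hu
  exact ⟨P ∪ {v}, ⟨Set.union_subset hPD (Set.singleton_subset_iff.2 hv),
    connected_induce_union hP.preconnected (connected_induce_singleton v).preconnected huP rfl huv,
    .inl haP⟩, .inr rfl⟩

variable (G C) in
/-- The neighbourhood of a vertex set: the vertices outside `C` with a neighbour in `C`. -/
def boundary : Set V := {v | v ∉ C ∧ ∃ c ∈ C, G.Adj c v}

theorem boundary_componentIn_subset : boundary G (componentIn G D a) ⊆ Dᶜ :=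
  fun _ ⟨hv, _, hu, huv⟩ hvD => hv (componentIn_adj_closed hu hvD huv)

end Connectivity

section Menger

variable {V κ : Type*} {G G' : SimpleGraph V} {A B D D₁ D₂ R S T Z : Set V} {P Q : κ → Set V}

/-- `Z` meets every connected subset of `D` that meets both `A` and `B`. Connected sets stand for
the paths of the usual definition. -/
def Separates (G : SimpleGraph V) (D Z A B : Set V) : Prop :=
  ∀ P ⊆ D, (G.induce P).Connected → (A ∩ P).Nonempty → (B ∩ P).Nonempty → (Z ∩ P).Nonempty

/-- `R` is a union of components of `G[D \ Z]` that contains `A ∩ D` up to `Z` and avoids `B`: a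
certificate that `Z` separates `A` from `B`. -/
structure IsSide (G : SimpleGraph V) (D Z A B R : Set V) : Prop where
  subset : R ⊆ D \ Z
  left_subset : A ∩ D ⊆ R ∪ Z
  disjoint_right : Disjoint R B
  closed : ∀ u ∈ R, ∀ v ∈ D \ Z, G.Adj u v → v ∈ R

theorem separates_iff_exists_isSide : Separates G D Z A B ↔ ∃ R, IsSide G D Z A B R := by
  constructor
  · refine fun h => ⟨⋃ a ∈ A ∩ (D \ Z), componentIn G (D \ Z) a,
      Set.iUnion₂_subset fun _ _ => componentIn_subset, fun a ⟨haA, haD⟩ => ?_, ?_, ?_⟩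
    · by_cases haZ : a ∈ Z
      · exact .inr haZ
      · exact .inl (Set.mem_biUnion ⟨haA, haD, haZ⟩ (mem_componentIn_self ⟨haD, haZ⟩))
    · simp only [Set.disjoint_left, Set.mem_iUnion₂]
      rintro b ⟨a, ⟨haA, haDZ⟩, hb⟩ hbB
      obtain ⟨z, hzZ, hz⟩ := h _ (componentIn_subset.trans Set.sdiff_subset)
        (connected_componentIn haDZ) ⟨a, haA, mem_componentIn_self haDZ⟩ ⟨b, hbB, hb⟩
      exact (componentIn_subset hz).2 hzZ
    · simp only [Set.mem_iUnion₂]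
      rintro u ⟨a, ha, hu⟩ v hv huv
      exact ⟨a, ha, componentIn_adj_closed hu hv huv⟩
  · rintro ⟨R, hR⟩ P hPD hP ⟨a, haA, haP⟩ ⟨b, hbB, hbP⟩
    by_contra hZ
    have hPZ : ∀ v ∈ P, v ∈ D \ Z := fun v hv => ⟨hPD hv, fun hvZ => hZ ⟨v, hvZ, hv⟩⟩
    have haR : a ∈ R := (hR.left_subset ⟨haA, hPD haP⟩).resolve_right (hPZ a haP).2
    exact hR.disjoint_right.notMem_of_mem_right hbB <| subset_of_connected_of_adj_closed hP haP haR
      (fun u _ hu v hv huv => hR.closed u hu v (hPZ v hv) huv) hbP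

theorem separates_right : Separates G D B A B := fun _ _ _ _ h => h

theorem Separates.symm (h : Separates G D Z A B) : Separates G D Z B A :=
  fun P hPD hP hB hA => h P hPD hP hA hB

theorem IsSide.symm (h : IsSide G D Z A B R) : IsSide G D Z B A (D \ (R ∪ Z)) where
  subset _ hv := ⟨hv.1, fun hZ => hv.2 (.inr hZ)⟩
  left_subset v hv := by
    by_cases hZ : v ∈ Z
    · exact .inr hZ
    · exact .inl ⟨hv.2, fun hRZ => h.disjoint_right.notMem_of_mem_right hv.1 (hRZ.resolve_right hZ)⟩
  disjoint_right := Set.disjoint_left.2 fun _ hv hA => hv.2 (h.left_subset ⟨hA, hv.1⟩)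
  closed u hu v hv huv :=
    ⟨hv.1, fun hRZ => hu.2 (.inl (h.closed v (hRZ.resolve_right hv.2) u
      ⟨hu.1, fun hZ => hu.2 (.inr hZ)⟩ huv.symm))⟩

/-- If `D₁` can only be left through `T`, a separator of `A` from `T` inside `D₁` separates `A`
from everything beyond `T`. -/
theorem Separates.extend (h : Separates G' D₁ Z A T) (hD : D₁ ⊆ D) (hA : A ∩ D ⊆ D₁)
    (hB : B ∩ D₁ ⊆ T)
    (hadj : ∀ u ∈ D₁ \ T, ∀ v ∈ D, G.Adj u v → v ∈ D₁ ∧ G'.Adj u v) : Separates G D Z A B := by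
  obtain ⟨R, hR⟩ := separates_iff_exists_isSide.1 h
  have hRT : ∀ v ∈ R, v ∉ T := fun _ hv => Set.disjoint_left.1 hR.disjoint_right hv
  refine separates_iff_exists_isSide.2 ⟨R, fun v hv => ⟨hD (hR.subset hv).1, (hR.subset hv).2⟩,
    fun a ha => hR.left_subset ⟨ha.1, hA ha⟩,
    Set.disjoint_left.2 fun v hv hvB => hRT v hv (hB ⟨hvB, (hR.subset hv).1⟩), ?_⟩
  intro u hu v hv huv
  obtain ⟨hvD₁, huv'⟩ := hadj u ⟨(hR.subset hu).1, hRT u hu⟩ v hv.1 huv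
  exact hR.closed u hu v ⟨hvD₁, hv.2⟩ huv'

/-- A family of disjoint connected subsets of `D`, each joining `A` to `B`; connected sets stand for
the disjoint paths of Menger's theorem. -/
structure IsLinkage (G : SimpleGraph V) (D A B : Set V) (P : κ → Set V) : Prop where
  disjoint : Pairwise (Function.onFun Disjoint P)
  subset : ∀ i, P i ⊆ D
  connected : ∀ i, (G.induce (P i)).Connected
  left : ∀ i, (A ∩ P i).Nonempty
  right : ∀ i, (B ∩ P i).Nonempty

namespace IsLinkage

theorem eq_of_mem (h : IsLinkage G D A B P) {i j : κ} {v : V} (hi : v ∈ P i) (hj : v ∈ P j) :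
    i = j :=
  h.disjoint.eq (Set.not_disjoint_iff.2 ⟨v, hi, hj⟩)

theorem symm (h : IsLinkage G D A B P) : IsLinkage G D B A P where
  __ := h
  left := h.right
  right := h.left

theorem mono (h : IsLinkage G' D₁ A B P) (hG : G' ≤ G) (hD : D₁ ⊆ D) : IsLinkage G D A B P where
  __ := h
  subset i := (h.subset i).trans hD
  connected i := (h.connected i).mono fun _ _ huv => hG huv

theorem comp_injective {ι : Type*} (h : IsLinkage G D A B P) {f : ι → κ}
    (hf : Function.Injective f) : IsLinkage G D A B (P ∘ f) where
  disjoint := h.disjoint.comp_of_injective hf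
  subset _ := h.subset _
  connected _ := h.connected _
  left _ := h.left _
  right _ := h.right _

theorem exists_rooted [Finite κ] {r : κ → V} (h : IsLinkage G D (Set.range r) B P) :
    ∃ Q : κ → Set V, IsLinkage G D (Set.range r) B Q ∧ ∀ i, r i ∈ Q i := by
  have hroot : ∀ i, ∃ j, r j ∈ P i := fun i => by
    obtain ⟨_, ⟨j, rfl⟩, hj⟩ := h.left i
    exact ⟨j, hj⟩
  choose σ hσ using hroot
  have hinj : Function.Injective σ := fun i j hij => h.eq_of_mem (hσ i) (hij ▸ hσ j)
  let e := Equiv.ofBijective σ (Finite.injective_iff_bijective.1 hinj)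
  exact ⟨P ∘ e.symm, h.comp_injective e.symm.injective, fun i => by
    simpa [e] using (Equiv.ofBijective_apply_symm_apply σ _ i ▸ hσ (e.symm i) :)⟩

theorem append {r r' : κ → V} (hP : IsLinkage G D₁ A T P) (hQ : IsLinkage G D₂ S B Q)
    (hr : ∀ i, r i ∈ P i) (hr' : ∀ i, r' i ∈ Q i) (hadj : ∀ i, r i = r' i ∨ G.Adj (r i) (r' i))
    (hD : ∀ v ∈ D₁ ∩ D₂, ∃ i, r i = v ∧ r' i = v) :
    IsLinkage G (D₁ ∪ D₂) A B fun i => P i ∪ Q i := by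
  have hPQ : ∀ i j, i ≠ j → Disjoint (P i) (Q j) := fun i j hij =>
    Set.disjoint_left.2 fun v hvP hvQ => by
      obtain ⟨l, rfl, hl⟩ := hD v ⟨hP.subset i hvP, hQ.subset j hvQ⟩
      exact hij ((hP.eq_of_mem hvP (hr l)).trans (hQ.eq_of_mem (hl ▸ hr' l) hvQ))
  refine ⟨fun i j hij => ?_, fun i => Set.union_subset_union (hP.subset i) (hQ.subset i),
    fun i => ?_, fun i => (hP.left i).mono (Set.inter_subset_inter_right _ Set.subset_union_left),
    fun i => (hQ.right i).mono (Set.inter_subset_inter_right _ Set.subset_union_right)⟩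
  · simp only [Function.onFun, Set.disjoint_union_left, Set.disjoint_union_right]
    exact ⟨⟨hP.disjoint hij, (hPQ j i hij.symm).symm⟩, hPQ i j hij, hQ.disjoint hij⟩
  · obtain heq | hadj := hadj i
    · exact induce_union_connected (hP.connected i).preconnected (hQ.connected i).preconnected
        ⟨r i, hr i, heq ▸ hr' i⟩
    · exact connected_induce_union (hP.connected i).preconnected (hQ.connected i).preconnected
        (hr i) (hr' i) hadj

theorem append_insert [Finite V] [Finite κ] {x y : V} (hP : IsLinkage G D₁ A (insert x S) P)
    (hQ : IsLinkage G D₂ (insert y S) B Q) (hcard : Nat.card κ = Nat.card (Option S))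
    (hxy : G.Adj x y) (hD : D₁ ∩ D₂ ⊆ S) : ∃ P' : κ → Set V, IsLinkage G (D₁ ∪ D₂) A B P' := by
  obtain ⟨e⟩ : Nonempty (κ ≃ Option S) := Finite.card_eq.1 hcard
  have hrange : ∀ a, insert a S = Set.range fun i => (e i).elim a Subtype.val := fun a => by
    refine .trans ?_ (e.surjective.range_comp fun o => o.elim a Subtype.val).symm
    ext v
    simp [Option.exists, eq_comm]
  rw [hrange] at hP hQ
  obtain ⟨P', hP', hr⟩ := hP.symm.exists_rooted
  obtain ⟨Q', hQ', hr'⟩ := hQ.exists_rooted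
  refine ⟨_, hP'.symm.append hQ' hr hr' (fun i => ?_) fun v hv => ⟨e.symm (some ⟨v, hD hv⟩), ?_⟩⟩
  · cases e i with
    | none => exact .inr hxy
    | some s => exact .inl rfl
  · simp

end IsLinkage

/-- Restoring one edge `xy` that leaves the side `R`: a separator of `A` from `S ∪ {x}` within
`R ∪ S` also separates `A` from `B`. -/
theorem IsSide.separates_of_insert {x y : V} (hR : IsSide G' D S A B R) (hS : S ⊆ D)
    (hy : y ∉ R) (hG : ∀ u v, G.Adj u v → G'.Adj u v ∨ s(u, v) = s(x, y))
    (h : Separates G' (R ∪ S) Z A (insert x S)) : Separates G D Z A B := by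
  refine h.extend (Set.union_subset (hR.subset.trans Set.sdiff_subset) hS) hR.left_subset ?_ ?_
  · rintro v ⟨hvB, hvR | hvS⟩
    · exact (hR.disjoint_right.notMem_of_mem_left hvR hvB).elim
    · exact .inr hvS
  · rintro u ⟨huR | huS, hu⟩ v hv huv
    · obtain huv' | huv' := hG u v huv
      · by_cases hvS : v ∈ S
        · exact ⟨.inr hvS, huv'⟩
        · exact ⟨.inl (hR.closed u huR v ⟨hv, hvS⟩ huv'), huv'⟩
      · rcases Sym2.eq_iff.1 huv' with ⟨rfl, -⟩ | ⟨rfl, -⟩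
        · exact (hu (.inl rfl)).elim
        · exact (hy huR).elim
    · exact (hu (.inr huS)).elim

/-- The inductive step of Menger's theorem: linkages on both sides of a small separator `S` of `G'`
are joined through `S` and through the edge `xy` that `G'` lacks. -/
theorem exists_isLinkage_of_isSide [Finite V] [Finite κ] {x y : V}
    (hR : IsSide G' D S A B R) (hS : S ⊆ D) (hcard : S.ncard < Nat.card κ)
    (hx : x ∈ R) (hy : y ∈ D \ (R ∪ S)) (hxy : G.Adj x y) (hle : G' ≤ G)
    (hG : ∀ u v, G.Adj u v → G'.Adj u v ∨ s(u, v) = s(x, y))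
    (hZ : ∀ Z ⊆ D, Separates G D Z A B → Nat.card κ ≤ Z.ncard)
    (menger : ∀ D A B : Set V, (∀ Z ⊆ D, Separates G' D Z A B → Nat.card κ ≤ Z.ncard) →
      ∃ P : κ → Set V, IsLinkage G' D A B P) :
    ∃ P : κ → Set V, IsLinkage G D A B P := by
  have hRS : R ∪ S ⊆ D := Set.union_subset (hR.subset.trans Set.sdiff_subset) hS
  have hRS' : D \ (R ∪ S) ∪ S ⊆ D := Set.union_subset Set.sdiff_subset hS
  have hxR' : x ∉ D \ (R ∪ S) := fun h => h.2 (.inl hx)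
  have hleft : ∀ Z ⊆ R ∪ S, Separates G' (R ∪ S) Z A (insert x S) → Nat.card κ ≤ Z.ncard :=
    fun Z hZRS h => hZ Z (hZRS.trans hRS)
      (hR.separates_of_insert hS (fun h => hy.2 (.inl h)) hG h)
  have hright : ∀ Z ⊆ D \ (R ∪ S) ∪ S, Separates G' (D \ (R ∪ S) ∪ S) Z B (insert y S) →
      Nat.card κ ≤ Z.ncard := fun Z hZRS h => hZ Z (hZRS.trans hRS')
    (hR.symm.separates_of_insert hS hxR' (fun u v huv => Sym2.eq_swap (a := x) ▸ hG u v huv) h).symm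
  obtain ⟨P, hP⟩ := menger _ _ _ hleft
  obtain ⟨Q, hQ⟩ := menger _ _ _ hright
  have hcard' : Nat.card κ = Nat.card (Option S) := by
    have := hleft _ (Set.insert_subset (.inl hx) Set.subset_union_right) separates_right
    rw [Set.ncard_insert_of_notMem (hR.subset hx).2] at this
    rw [Finite.card_option, Nat.card_coe_set_eq]
    lia
  obtain ⟨P', hP'⟩ := (hP.mono hle le_rfl).append_insert (hQ.symm.mono hle le_rfl) hcard' hxy
    fun v hv => hv.2.elim (fun h => (h.2 hv.1).elim) id
  exact ⟨P', hP'.mono le_rfl (Set.union_subset hRS hRS')⟩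

theorem exists_isLinkage_bot [Finite V] [Finite κ]
    (hZ : ∀ Z ⊆ D, Separates ⊥ D Z A B → Nat.card κ ≤ Z.ncard) :
    ∃ P : κ → Set V, IsLinkage ⊥ D A B P := by
  have hsep : Separates ⊥ D (A ∩ B ∩ D) A B := by
    rintro P hPD hP ⟨a, haA, haP⟩ ⟨b, hbB, hbP⟩
    obtain rfl : b = a := subset_of_connected_of_adj_closed (R := {a}) hP haP rfl
      (fun _ _ _ _ _ h => h.elim) hbP
    exact ⟨b, ⟨⟨haA, hbB⟩, hPD hbP⟩, hbP⟩
  have hcard : Nat.card κ ≤ Nat.card ↥(A ∩ B ∩ D) := hZ _ Set.inter_subset_right hsep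
  obtain ⟨f⟩ : Nonempty (κ ↪ ↥(A ∩ B ∩ D)) := by
    have := Fintype.ofFinite κ
    have := Fintype.ofFinite ↥(A ∩ B ∩ D)
    exact Function.Embedding.nonempty_of_card_le (by simpa using hcard)
  exact ⟨fun i => {(f i : V)}, fun i j hij => by simpa [Subtype.val_inj] using hij,
    fun i => Set.singleton_subset_iff.2 (f i).2.2, fun i => connected_induce_singleton _,
    fun i => ⟨_, (f i).2.1.1, rfl⟩, fun i => ⟨_, (f i).2.1.2, rfl⟩⟩

/-- **Menger's theorem**, by deleting an edge. -/
theorem exists_isLinkage [Finite V] [Finite κ]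
    (hZ : ∀ Z ⊆ D, Separates G D Z A B → Nat.card κ ≤ Z.ncard) :
    ∃ P : κ → Set V, IsLinkage G D A B P := by
  induction G using WellFoundedLT.induction generalizing D A B with | ind G ih
  obtain rfl | ⟨x₀, y₀, hxy₀⟩ := eq_or_ne G ⊥ |>.imp_right ne_bot_iff_exists_adj.1
  · exact exists_isLinkage_bot hZ
  set G' := G.deleteEdges {s(x₀, y₀)}
  have hle : G' ≤ G := deleteEdges_le _
  have hlt : G' < G := hle.lt_of_ne fun h => by
    have := h ▸ hxy₀
    simp [G'] at this
  by_cases hZ' : ∀ Z ⊆ D, Separates G' D Z A B → Nat.card κ ≤ Z.ncard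
  · obtain ⟨P, hP⟩ := ih G' hlt hZ'
    exact ⟨P, hP.mono hle le_rfl⟩
  push Not at hZ'
  obtain ⟨S, hSD, hS, hcard⟩ := hZ'
  obtain ⟨R, hR⟩ := separates_iff_exists_isSide.1 hS
  obtain ⟨x, hx, y, hy, hxy, hyR⟩ : ∃ x ∈ R, ∃ y ∈ D \ S, G.Adj x y ∧ y ∉ R := by
    by_contra! hclosed
    exact (hZ S hSD (separates_iff_exists_isSide.2 ⟨R, { hR with closed := hclosed }⟩)).not_gt hcard
  have hxy' : s(x, y) = s(x₀, y₀) := by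
    by_contra hne
    exact hyR (hR.closed x hx y hy (by simp [G', hxy, hne]))
  refine exists_isLinkage_of_isSide hR hSD hcard hx ⟨hy.1, fun h => h.elim hyR hy.2⟩ hxy hle
    (fun u v huv => ?_) hZ fun D A B => ih G' hlt
  by_cases heq : s(u, v) = s(x, y)
  · exact .inr heq
  · exact .inl (by simp [G', huv, ← hxy', heq])

theorem exists_rooted_isLinkage [Finite V] {ι : Type*} {I : Set ι} (hI : I.Finite) {r : ι → V}
    (hZ : ∀ Z ⊆ D, Separates G D Z (r '' I) B → I.ncard ≤ Z.ncard) :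
    ∃ P : ι → Set V, I.PairwiseDisjoint P ∧
      ∀ i ∈ I, P i ⊆ D ∧ (G.induce (P i)).Connected ∧ r i ∈ P i ∧ (B ∩ P i).Nonempty := by
  have := hI.to_subtype
  rw [Set.image_eq_range] at hZ
  obtain ⟨P, hP⟩ := exists_isLinkage (κ := I) hZ
  obtain ⟨Q, hQ, hr⟩ := hP.exists_rooted
  classical
  refine ⟨fun i => if h : i ∈ I then Q ⟨i, h⟩ else ∅, fun i hi j hj hij => ?_, fun i hi => ?_⟩
  · simpa [Function.onFun, hi, hj] using hQ.disjoint (Subtype.coe_ne_coe.1 (by simpa using hij))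
  · beta_reduce
    rw [dif_pos hi]
    exact ⟨hQ.subset _, hQ.connected _, hr ⟨i, hi⟩, hQ.right _⟩

end Menger

section Trees

variable {ι κ : Type*} {T : SimpleGraph ι} {T' : SimpleGraph κ} {S : Set ι}
  {S' : Set κ} {s t a : ι} {b : κ}

theorem isTree_sum_sup_edge [Finite ι] [Finite κ] (hT : T.IsTree) (hT' : T'.IsTree) (a : ι)
    (b : κ) : ((T ⊕g T') ⊔ edge (.inl a) (.inr b)).IsTree := by
  have hcard : Nat.card ((T ⊕g T') ⊔ edge (.inl a) (.inr b)).edgeSet =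
      Nat.card T.edgeSet + Nat.card T'.edgeSet + 1 := by
    have hnotMem : s(.inl a, .inr b) ∉ (T ⊕g T').edgeSet := by simp
    rw [← Nat.card_sum, ← Nat.card_congr edgeSetSumEquiv, Nat.card_coe_set_eq, Nat.card_coe_set_eq,
      edgeSet_sup, edgeSet_edge_of_ne (by simp), Set.union_singleton,
      Set.ncard_insert_of_notMem hnotMem]
  refine isTree_iff_connected_and_card.2 ⟨hT.connected.sum_sup_edge hT'.connected, ?_⟩
  have h := (isTree_iff_connected_and_card.1 hT).2
  have h' := (isTree_iff_connected_and_card.1 hT').2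
  rw [hcard, Nat.card_sum]
  lia

theorem connected_induce_inl (a : ι) (b : κ) (hS : (T.induce S).Connected) :
    (((T ⊕g T') ⊔ edge (.inl a) (.inr b)).induce (Sum.inl '' S)).Connected :=
  connected_induce_image ((Hom.ofLE le_sup_left).comp Embedding.sumInl.toHom) hS

theorem connected_induce_inr (a : ι) (b : κ) (hS' : (T'.induce S').Connected) :
    (((T ⊕g T') ⊔ edge (.inl a) (.inr b)).induce (Sum.inr '' S')).Connected :=
  connected_induce_image ((Hom.ofLE le_sup_left).comp Embedding.sumInr.toHom) hS'

theorem connected_induce_inl_union_inr (hS : (T.induce S).Connected)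
    (hS' : (T'.induce S').Connected) (ha : a ∈ S) (hb : b ∈ S') :
    (((T ⊕g T') ⊔ edge (.inl a) (.inr b)).induce (Sum.inl '' S ∪ Sum.inr '' S')).Connected :=
  connected_induce_union (connected_induce_inl a b hS).preconnected
    (connected_induce_inr a b hS').preconnected ⟨a, ha, rfl⟩ ⟨b, hb, rfl⟩
    (.inr (by simp [edge_adj]))

theorem mem_of_mem_support_of_isAcyclic (hT : T.IsAcyclic) {p : T.Walk s t} (hp : p.IsPath)
    (hS : (T.induce S).Connected) (hs : s ∈ S) (ht : t ∈ S) {x : ι} (hx : x ∈ p.support) :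
    x ∈ S := by
  obtain ⟨q, hq⟩ := hS.preconnected.exists_isPath ⟨s, hs⟩ ⟨t, ht⟩
  let f := (Embedding.induce S : T.induce S ↪g T)
  have hpq : p = q.map f.toHom := congrArg Subtype.val
    ((hT.subsingleton_path s t).elim ⟨p, hp⟩ ⟨_, hq.map f.injective⟩)
  have hsupp : p.support = q.support.map f := hpq ▸ Walk.support_map f.toHom q
  obtain ⟨y, -, rfl⟩ := List.mem_map.1 (hsupp ▸ hx)
  exact y.2

theorem connected_sInter_of_isTree (hT : T.IsTree) {𝒮 : Set (Set ι)}
    (h𝒮 : ∀ S ∈ 𝒮, (T.induce S).Connected) (hs : s ∈ ⋂₀ 𝒮) : (T.induce (⋂₀ 𝒮)).Connected := by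
  refine induce_connected_of_patches s hs fun {t} ht => ?_
  obtain ⟨p, hp⟩ := hT.connected.preconnected.exists_isPath s t
  exact ⟨{x | x ∈ p.support}, fun x hx S hS => mem_of_mem_support_of_isAcyclic hT.isAcyclic hp
    (h𝒮 S hS) (hs S hS) (ht S hS) hx, p.start_mem_support, p.end_mem_support,
    p.connected_induce_support.preconnected _ _⟩

end Trees

section PartialTreeDecomp

variable {V : Type*} {G : SimpleGraph V} {U U' : Set V} {X Y : Finset V} {q : Finset V → Prop}

/-- A tree-decomposition of `G[U]` whose tree is rooted. -/
structure PartialTreeDecomp (G : SimpleGraph V) (U : Set V) where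
  ι : Type
  fint : Fintype ι
  tree : SimpleGraph ι
  isTree : tree.IsTree
  root : ι
  bag : ι → Finset V
  bag_subset : ∀ t, (bag t : Set V) ⊆ U
  edge_mem : ∀ v ∈ U, ∀ w ∈ U, G.Adj v w → ∃ t, v ∈ bag t ∧ w ∈ bag t
  support_conn : ∀ v ∈ U, (tree.induce {t | v ∈ bag t}).Connected

namespace PartialTreeDecomp

/-- The decomposition of `G[X]` with a single bag. -/
def single (G : SimpleGraph V) (X : Finset V) : PartialTreeDecomp G X where
  ι := Unit
  fint := inferInstance
  tree := ⊥
  isTree := .of_subsingleton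
  root := ()
  bag _ := X
  bag_subset _ := le_rfl
  edge_mem _ hv _ hw _ := ⟨(), hv, hw⟩
  support_conn v hv := by
    have : Nonempty {_t : Unit | v ∈ X} := ⟨(), hv⟩
    exact .of_subsingleton

/-- Two partial decompositions joined by an edge between their roots. -/
def glue (D : PartialTreeDecomp G U) (D' : PartialTreeDecomp G U')
    (hU : ∀ v ∈ U ∩ U', v ∈ D.bag D.root ∧ v ∈ D'.bag D'.root)
    (hadj : ∀ v ∈ U, ∀ w ∈ U', G.Adj v w → w ∈ U ∨ v ∈ U') : PartialTreeDecomp G (U ∪ U') where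
  ι := D.ι ⊕ D'.ι
  fint := have := D.fint; have := D'.fint; inferInstance
  tree := (D.tree ⊕g D'.tree) ⊔ edge (.inl D.root) (.inr D'.root)
  isTree := have := D.fint; have := D'.fint; isTree_sum_sup_edge D.isTree D'.isTree _ _
  root := .inl D.root
  bag := Sum.elim D.bag D'.bag
  bag_subset
    | .inl t => (D.bag_subset t).trans Set.subset_union_left
    | .inr t => (D'.bag_subset t).trans Set.subset_union_right
  edge_mem := by
    simp only [Sum.exists, Sum.elim_inl, Sum.elim_inr]
    rintro v (hv | hv) w (hw | hw) hvw
    · exact .inl (D.edge_mem v hv w hw hvw)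
    · exact (hadj v hv w hw hvw).imp (D.edge_mem v hv w · hvw) (D'.edge_mem v · w hw hvw)
    · exact (hadj w hw v hv hvw.symm).imp (D.edge_mem v · w hw hvw) (D'.edge_mem v hv w · hvw)
    · exact .inr (D'.edge_mem v hv w hw hvw)
  support_conn v hv := by
    have hset : {t | v ∈ Sum.elim D.bag D'.bag t} =
        Sum.inl '' {t | v ∈ D.bag t} ∪ Sum.inr '' {t | v ∈ D'.bag t} := by
      ext (t | t) <;> simp
    rw [hset]
    by_cases h : v ∈ U <;> by_cases h' : v ∈ U'
    · obtain ⟨hroot, hroot'⟩ := hU v ⟨h, h'⟩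
      exact connected_induce_inl_union_inr (D.support_conn v h) (D'.support_conn v h') hroot hroot'
    · have hempty : {t | v ∈ D'.bag t} = ∅ :=
        Set.eq_empty_of_forall_notMem fun t ht => h' (D'.bag_subset t ht)
      rw [hempty, Set.image_empty, Set.union_empty]
      exact connected_induce_inl _ _ (D.support_conn v h)
    · have hempty : {t | v ∈ D.bag t} = ∅ :=
        Set.eq_empty_of_forall_notMem fun t ht => h (D.bag_subset t ht)
      rw [hempty, Set.image_empty, Set.empty_union]
      exact connected_induce_inr _ _ (D'.support_conn v h')
    · exact (hv.elim h h').elim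

/-- A partial tree-decomposition covering all vertices is a tree-decomposition. -/
def toTreeDecomp (D : PartialTreeDecomp G Set.univ) : TreeDecomp G where
  __ := D
  nonempty := ⟨D.root⟩
  edge_mem v w := D.edge_mem v trivial w trivial
  support_conn v := D.support_conn v trivial

end PartialTreeDecomp

/-- `G[U]` has a tree-decomposition with root bag `X` in which all bags satisfy `q`. -/
def HasRootedDecomp (G : SimpleGraph V) (q : Finset V → Prop) (X : Finset V) (U : Set V) : Prop :=
  ∃ D : PartialTreeDecomp G U, D.bag D.root = X ∧ ∀ t, q (D.bag t)

namespace HasRootedDecomp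

theorem single (hX : q X) : HasRootedDecomp G q X X :=
  ⟨.single G X, rfl, fun _ => hX⟩

theorem glue (h : HasRootedDecomp G q X U) (h' : HasRootedDecomp G q Y U')
    (hU : ∀ v ∈ U ∩ U', v ∈ X ∧ v ∈ Y)
    (hadj : ∀ v ∈ U, ∀ w ∈ U', G.Adj v w → w ∈ U ∨ v ∈ U') :
    HasRootedDecomp G q X (U ∪ U') := by
  obtain ⟨D, rfl, hq⟩ := h
  obtain ⟨D', rfl, hq'⟩ := h'
  exact ⟨D.glue D' hU hadj, rfl, Sum.rec hq hq'⟩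

theorem glue_components [Finite V] (hX : q X)
    (hC : ∀ a ∉ X, HasRootedDecomp G q X (X ∪ componentIn G (↑X)ᶜ a)) :
    HasRootedDecomp G q X Set.univ := by
  suffices h : ∀ U ⊆ (X : Set V)ᶜ, (∀ u ∈ U, ∀ v ∉ X, G.Adj u v → v ∈ U) →
      HasRootedDecomp G q X (X ∪ U) by
    simpa using h _ le_rfl fun _ _ v hv _ => hv
  intro U
  induction U using WellFoundedLT.induction with | ind U ih
  intro hUX hU
  obtain rfl | ⟨a, ha⟩ := U.eq_empty_or_nonempty
  · simpa using single hX
  set C := componentIn G (↑X)ᶜ a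
  have hCU : C ⊆ U := subset_of_connected_of_adj_closed (connected_componentIn (hUX ha))
    (mem_componentIn_self (hUX ha)) ha fun u _ hu v hv huv => hU u hu v (componentIn_subset hv) huv
  have hlt : U \ C < U :=
    sdiff_lt hCU (Set.nonempty_of_mem (mem_componentIn_self (hUX ha))).ne_empty
  have hnadj : ∀ u ∈ U \ C, ∀ v ∈ C, ¬ G.Adj u v := fun u hu v hv huv =>
    hu.2 (componentIn_adj_closed hv (hUX hu.1) huv.symm)
  have hglue := (ih _ hlt (Set.sdiff_subset.trans hUX) fun u hu v hv huv =>
    ⟨hU u hu.1 v hv huv, fun hvC => hnadj u hu v hvC huv⟩).glue (hC a (hUX ha)) ?_ ?_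
  · rwa [← Set.union_union_distrib_left, Set.sdiff_union_of_subset hCU] at hglue
  · rintro v ⟨hv | hv, hv' | hv'⟩
    exacts [⟨hv, hv⟩, ⟨hv, hv⟩, ⟨hv', hv'⟩, (hv.2 hv').elim]
  · rintro v (hv | hv) w (hw | hw) hvw
    exacts [.inl (.inl hw), .inr (.inl hv), .inl (.inl hw), (hnadj v hv w hw hvw).elim]

end HasRootedDecomp

theorem TreeDecomp.connected_support (D : TreeDecomp G) {P : Set V} (hP : (G.induce P).Connected) :
    (D.tree.induce {t | ∃ v ∈ P, v ∈ D.bag t}).Connected := by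
  obtain ⟨a, ha⟩ := hP.nonempty
  obtain ⟨s, hs⟩ := (D.support_conn a).nonempty
  set S := {t | ∃ v ∈ P, v ∈ D.bag t}
  have hsS : s ∈ S := ⟨a, ha, hs⟩
  have hsub : ∀ v ∈ P, {t | v ∈ D.bag t} ⊆ S := fun v hv t ht => ⟨v, hv, ht⟩
  have hPR : P ⊆ {v | {t | v ∈ D.bag t} ⊆ componentIn D.tree S s} := by
    refine subset_of_connected_of_adj_closed hP ha
      (subset_componentIn (hsub a ha) (D.support_conn a) hs) fun u _ hu v hv huv => ?_
    obtain ⟨t, htu, htv⟩ := D.edge_mem huv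
    exact Set.subset_union_right.trans <| subset_componentIn
      (Set.union_subset componentIn_subset (hsub v hv))
      (induce_union_connected (connected_componentIn hsS).preconnected
        (D.support_conn v).preconnected ⟨t, hu htu, htv⟩) (.inl (mem_componentIn_self hsS))
  have heq : S = componentIn D.tree S s :=
    Set.Subset.antisymm (fun t ⟨v, hv, ht⟩ => hPR hv ht) componentIn_subset
  exact heq ▸ connected_componentIn hsS

end PartialTreeDecomp

section Brambles

variable {V : Type*} {G : SimpleGraph V} {𝓑 : Set (Set V)} {B C : Set V} {X : Finset V} {k : ℕ}

/-- A bramble: a family of connected vertex sets that pairwise touch. -/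
def IsBramble (G : SimpleGraph V) (𝓑 : Set (Set V)) : Prop :=
  ∀ B ∈ 𝓑, ∀ B' ∈ 𝓑, (G.induce (B ∪ B')).Connected

/-- `Z` is a cover (hitting set) of the family `𝓑`. -/
def Covers (Z : Set V) (𝓑 : Set (Set V)) : Prop := ∀ B ∈ 𝓑, (Z ∩ B).Nonempty

/-- The condition on bags that the proof of tree-width duality maintains: a bag with more than `k`
vertices does not cover `𝓑`. -/
def Admissible (k : ℕ) (𝓑 : Set (Set V)) (F : Finset V) : Prop := Covers F 𝓑 → F.card ≤ k

theorem IsBramble.connected (h𝓑 : IsBramble G 𝓑) (hB : B ∈ 𝓑) : (G.induce B).Connected :=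
  Set.union_self B ▸ h𝓑 B hB B hB

theorem IsBramble.insert (h𝓑 : IsBramble G 𝓑) (hC : (G.induce C).Connected)
    (h : ∀ B ∈ 𝓑, (G.induce (C ∪ B)).Connected) : IsBramble G (insert C 𝓑) := by
  rintro B (rfl | hB) B' (rfl | hB')
  · rwa [Set.union_self]
  · exact h B' hB'
  · exact Set.union_comm B' B ▸ h B hB
  · exact h𝓑 B hB B' hB'

theorem covers_of_separates {X Y Z : Set V} (h𝓑 : ∀ B ∈ 𝓑, (G.induce B).Connected)
    (hX : Covers X 𝓑) (hY : Covers Y 𝓑) (hYC : Disjoint Y C) (hC : boundary G C ⊆ X)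
    (hZ : Separates G Cᶜ Z X Y) : Covers Z 𝓑 := by
  intro B hB
  obtain ⟨x, hxX, hxB⟩ := hX B hB
  obtain ⟨b, hbY, hbB⟩ := hY B hB
  have hb : b ∈ B \ C := ⟨hbB, hYC.notMem_of_mem_left hbY⟩
  set K := componentIn G (B \ C) b
  have hbK : b ∈ K := mem_componentIn_self hb
  have hXK : (X ∩ K).Nonempty := by
    by_cases hxK : x ∈ K
    · exact ⟨x, hxX, hxK⟩
    obtain ⟨u, ⟨-, huK⟩, v, ⟨hvB, hvK⟩, huv⟩ := exists_adj_of_connected (h𝓑 B hB) hbB hbK hxB hxK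
    have hvC : v ∈ C := by_contra fun hvC => hvK (componentIn_adj_closed huK ⟨hvB, hvC⟩ huv)
    exact ⟨u, hC ⟨(componentIn_subset huK).2, v, hvC, huv.symm⟩, huK⟩
  obtain ⟨z, hzZ, hzK⟩ := hZ K (fun _ hv => (componentIn_subset hv).2) (connected_componentIn hb)
    hXK ⟨b, hbY, hbK⟩
  exact ⟨z, hzZ, (componentIn_subset hzK).1⟩

namespace TreeDecomp

variable {D : TreeDecomp G} {s t : D.ι} {v : V}

/-- The smallest subtree that contains the node `s` and all nodes whose bag contains `v`. -/
def hull (D : TreeDecomp G) (s : D.ι) (v : V) : Set D.ι :=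
  ⋂₀ {Q | s ∈ Q ∧ {t | v ∈ D.bag t} ⊆ Q ∧ (D.tree.induce Q).Connected}

theorem mem_hull_self : s ∈ D.hull s v := fun _ hQ => hQ.1

theorem mem_hull_of_mem_bag (hv : v ∈ D.bag t) : t ∈ D.hull s v := fun _ hQ => hQ.2.1 hv

theorem connected_hull : (D.tree.induce (D.hull s v)).Connected :=
  connected_sInter_of_isTree D.isTree (fun _ hQ => hQ.2.2) mem_hull_self

theorem exists_mem_bag_of_mem_hull (hB : (G.induce B).Connected) (hv : v ∈ B)
    (hs : ∃ u ∈ B, u ∈ D.bag s) (ht : t ∈ D.hull s v) : ∃ u ∈ B, u ∈ D.bag t :=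
  ht {t | ∃ u ∈ B, u ∈ D.bag t} ⟨hs, fun _ h => ⟨v, hv, h⟩, D.connected_support hB⟩

open Classical in
/-- The restriction of `D` to `X ∪ C`, rooted at the node `s`, whose bag is made equal to `X` by
adding each vertex of `X` to all bags between its old bags and `s`. -/
noncomputable def reroot (D : TreeDecomp G) (s : D.ι) (X : Finset V) (C : Set V)
    (hXC : Disjoint (X : Set V) C) : PartialTreeDecomp G (X ∪ C) where
  ι := D.ι
  fint := D.fint
  tree := D.tree
  isTree := D.isTree
  root := s
  bag t := {v ∈ D.bag t | v ∈ C} ∪ {x ∈ X | t ∈ D.hull s x}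
  bag_subset t v hv := by
    simp only [Finset.coe_union, Finset.coe_filter, Set.mem_union, Set.mem_ofPred_eq] at hv
    exact hv.symm.imp And.left And.right
  edge_mem u hu v hv huv := by
    by_cases h : u ∈ X ∧ v ∈ X
    · exact ⟨s, by simp [h, mem_hull_self]⟩
    · obtain ⟨t, htu, htv⟩ := D.edge_mem huv
      refine ⟨t, ?_⟩
      simp only [Finset.mem_union, Finset.mem_filter, htu, htv, mem_hull_of_mem_bag, true_and,
        and_true]
      exact ⟨hu.symm, hv.symm⟩
  support_conn v hv := by
    obtain hvX | hvC := hv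
    · convert D.connected_hull (s := s) (v := v) using 3 <;>
        simp [hXC.notMem_of_mem_left hvX, Finset.mem_coe.1 hvX]
    · convert D.support_conn v using 3 <;>
        simp [hvC, mt Finset.mem_coe.2 (hXC.notMem_of_mem_right hvC)]

theorem mem_bag_reroot {hXC : Disjoint (X : Set V) C} :
    v ∈ (D.reroot s X C hXC).bag t ↔ v ∈ D.bag t ∧ v ∈ C ∨ v ∈ X ∧ t ∈ D.hull s v := by
  simp [reroot]

theorem bag_root_reroot (hXC : Disjoint (X : Set V) C) (hs : Disjoint (D.bag s : Set V) C) :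
    (D.reroot s X C hXC).bag s = X := by
  ext v
  simpa [mem_bag_reroot, mem_hull_self] using
    fun hv hvC => (hs.notMem_of_mem_left (Finset.mem_coe.2 hv) hvC).elim

theorem card_bag_reroot_le {hXC : Disjoint (X : Set V) C} {P : V → Set V}
    (hdisj : (X : Set V).PairwiseDisjoint P)
    (hP : ∀ x ∈ X, P x ⊆ Cᶜ ∧ (G.induce (P x)).Connected ∧ x ∈ P x ∧
      (↑(D.bag s) ∩ P x).Nonempty) :
    ((D.reroot s X C hXC).bag t).card ≤ (D.bag t).card := by
  classical
  have hmeet : ∀ x ∈ X, t ∈ D.hull s x → ∃ v ∈ P x, v ∈ D.bag t := fun x hx ht => by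
    obtain ⟨-, hconn, hxP, u, hus, hu⟩ := hP x hx
    exact exists_mem_bag_of_mem_hull hconn hxP ⟨u, hu, hus⟩ ht
  choose! g hgP hgt using hmeet
  have hcard : {x ∈ X | t ∈ D.hull s x}.card ≤ {v ∈ D.bag t | v ∉ C}.card := by
    refine Finset.card_le_card_of_injOn g (fun x hx => ?_) fun x hx y hy hxy => ?_
    · obtain ⟨hxX, hxt⟩ := Finset.mem_filter.1 hx
      exact Finset.mem_filter.2 ⟨hgt x hxX hxt, (hP x hxX).1 (hgP x hxX hxt)⟩
    · obtain ⟨hxX, hxt⟩ := Finset.mem_filter.1 hx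
      obtain ⟨hyX, hyt⟩ := Finset.mem_filter.1 hy
      exact hdisj.elim_set hxX hyX _ (hgP x hxX hxt) (hxy ▸ hgP y hyX hyt)
  calc ((D.reroot s X C hXC).bag t).card
      ≤ {v ∈ D.bag t | v ∈ C}.card + {x ∈ X | t ∈ D.hull s x}.card := by
        convert Finset.card_union_le _ _
        rfl
    _ ≤ {v ∈ D.bag t | v ∈ C}.card + {v ∈ D.bag t | v ∉ C}.card := by gcongr
    _ = (D.bag t).card := Finset.card_filter_add_card_filter_not _

end TreeDecomp

/-- If a component `C` of `G - X` does not touch some member of the bramble, then `C` together with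
its neighbourhood is a bag that does not cover the bramble. -/
theorem HasRootedDecomp.of_not_connected_union [Finite V] (h𝓑 : ∀ B ∈ 𝓑, (G.induce B).Connected)
    (hX : X.card ≤ k) (hC : (G.induce C).Connected) (hCX : boundary G C ⊆ X) (hB : B ∈ 𝓑)
    (hBC : ¬ (G.induce (C ∪ B)).Connected) :
    HasRootedDecomp G (Admissible k 𝓑) X (X ∪ C) := by
  let F := (Set.toFinite (C ∪ boundary G C)).toFinset
  have hF : Admissible k 𝓑 F := fun hcov => by
    obtain ⟨v, hvF, hvB⟩ := hcov B hB
    refine (hBC ?_).elim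
    obtain hvC | ⟨-, c, hcC, hcv⟩ : v ∈ C ∪ boundary G C := by simpa [F] using hvF
    · exact induce_union_connected hC.preconnected (h𝓑 B hB).preconnected ⟨v, hvC, hvB⟩
    · exact connected_induce_union hC.preconnected (h𝓑 B hB).preconnected hcC hvB hcv
  have h := (HasRootedDecomp.single (G := G) (q := Admissible k 𝓑) fun _ => hX).glue
    (.single hF) (fun v hv => hv) fun v _ w hw hvw => ?_
  · convert h using 1
    simp [F, ← Set.union_assoc, Set.union_right_comm _ C, Set.union_eq_self_of_subset_right hCX]
  · simp only [F, Set.Finite.coe_toFinset] at hw ⊢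
    obtain hwC | hwC := hw
    · exact .inr (or_iff_not_imp_left.2 fun hvC => ⟨hvC, w, hwC, hvw.symm⟩)
    · exact .inl (hCX hwC)

/-- Menger's theorem links a minimum cover `X` to a large bag `s` outside `C`, so rerooting at `s`
does not increase bags. -/
theorem HasRootedDecomp.of_treeDecomp [Finite V] (h𝓑 : ∀ B ∈ 𝓑, (G.induce B).Connected)
    (hX : Covers X 𝓑) (hXk : X.card ≤ k) (hmin : ∀ Z : Set V, Covers Z 𝓑 → X.card ≤ Z.ncard)
    (hXC : Disjoint (X : Set V) C) (hCX : boundary G C ⊆ X) {D : TreeDecomp G}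
    (hD : ∀ t, Admissible k (insert C 𝓑) (D.bag t)) {s : D.ι} (hs : ¬ Admissible k 𝓑 (D.bag s)) :
    HasRootedDecomp G (Admissible k 𝓑) X (X ∪ C) := by
  obtain ⟨hcov, hcard⟩ := Classical.not_imp.1 hs
  have hsC : Disjoint (D.bag s : Set V) C := by
    by_contra hsC
    exact hcard (hD s (Set.forall_mem_insert.2 ⟨Set.not_disjoint_iff_nonempty_inter.1 hsC, hcov⟩))
  obtain ⟨P, hdisj, hP⟩ := exists_rooted_isLinkage (G := G) (D := Cᶜ) (B := D.bag s)
    X.finite_toSet (r := id) fun Z _ hZ => by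
      rw [Set.image_id] at hZ
      simpa using hmin Z (covers_of_separates h𝓑 hX hcov hsC hCX hZ)
  refine ⟨D.reroot s X C hXC, D.bag_root_reroot hXC hsC, fun t ht => ?_⟩
  by_cases htC : Covers (D.bag t) (insert C 𝓑)
  · exact (TreeDecomp.card_bag_reroot_le hdisj hP).trans (hD t htC)
  obtain htC | ⟨B, hB, htB⟩ :
      ¬ (↑(D.bag t) ∩ C).Nonempty ∨ ∃ B ∈ 𝓑, ¬ (↑(D.bag t) ∩ B).Nonempty := by
    by_contra! h
    exact htC (Set.forall_mem_insert.2 h)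
  · refine (Finset.card_le_card fun v hv => ?_).trans hXk
    exact (TreeDecomp.mem_bag_reroot.1 hv).elim (fun h => (htC ⟨v, h⟩).elim) And.left
  · obtain ⟨v, hvt, hvB⟩ := ht B hB
    obtain ⟨u, hus, huB⟩ := hcov B hB
    obtain h | h := TreeDecomp.mem_bag_reroot.1 hvt
    · exact (htB ⟨v, h.1, hvB⟩).elim
    · obtain ⟨w, hwB, hwt⟩ := TreeDecomp.exists_mem_bag_of_mem_hull (h𝓑 B hB) hvB ⟨u, huB, hus⟩ h.2
      exact (htB ⟨w, hwt, hwB⟩).elim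

theorem IsBramble.exists_treeDecomp_admissible [Finite V]
    (hk : ∀ 𝓑, IsBramble G 𝓑 → ∃ X : Finset V, Covers X 𝓑 ∧ X.card ≤ k) (h𝓑 : IsBramble G 𝓑) :
    ∃ D : TreeDecomp G, ∀ t, Admissible k 𝓑 (D.bag t) := by
  induction 𝓑 using WellFoundedGT.induction with | ind 𝓑 ih
  by_contra! hno
  obtain ⟨Y, hY, hYk⟩ := hk 𝓑 h𝓑
  obtain ⟨X, hX, hmin⟩ := Set.exists_min_image {X : Finset V | Covers (X : Set V) 𝓑}
    Finset.card (Set.toFinite _) ⟨Y, hY⟩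
  have hXk : X.card ≤ k := (hmin Y hY).trans hYk
  suffices h : HasRootedDecomp G (Admissible k 𝓑) X Set.univ by
    obtain ⟨D, -, hD⟩ := h
    obtain ⟨t, ht⟩ := hno D.toTreeDecomp
    exact ht (hD t)
  refine .glue_components (fun _ => hXk) fun a ha => ?_
  set C := componentIn G (↑X)ᶜ a
  have hC : (G.induce C).Connected := connected_componentIn ha
  have hXC : Disjoint (X : Set V) C := Set.subset_compl_iff_disjoint_left.1 componentIn_subset
  have hCX : boundary G C ⊆ X := by simpa using boundary_componentIn_subset (G := G) (D := (↑X)ᶜ)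
  by_cases htouch : ∀ B ∈ 𝓑, (G.induce (C ∪ B)).Connected
  · have hC𝓑 : C ∉ 𝓑 := fun h => Set.not_disjoint_iff_nonempty_inter.2 (hX C h) hXC
    obtain ⟨D, hD⟩ := ih _ (Set.ssubset_insert hC𝓑) (h𝓑.insert hC htouch)
    obtain ⟨s, hs⟩ := hno D
    refine .of_treeDecomp (fun B => h𝓑.connected) hX hXk (fun Z hZ => ?_) hXC hCX hD hs
    simpa [← Set.ncard_eq_toFinset_card] using hmin (Set.toFinite Z).toFinset (by simpa using hZ)
  · push Not at htouch
    obtain ⟨B, hB, hCB⟩ := htouch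
    exact .of_not_connected_union (fun B => h𝓑.connected) hXk hC hCX hB hCB

/-- **Tree-width duality** (Seymour and Thomas); the proof is that of Bellenbaum and Diestel. -/
theorem exists_treeDecomp_card_le [Finite V]
    (hk : ∀ 𝓑, IsBramble G 𝓑 → ∃ X : Finset V, Covers X 𝓑 ∧ X.card ≤ k) :
    ∃ D : TreeDecomp G, ∀ t, (D.bag t).card ≤ k := by
  obtain ⟨D, hD⟩ := IsBramble.exists_treeDecomp_admissible hk (𝓑 := ∅) fun _ h => h.elim
  exact ⟨D, fun t => hD t fun _ h => h.elim⟩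

end Brambles

section RootedModels

variable {V W : Type*} {G : SimpleGraph V} {H : SimpleGraph W} {𝓑 : Set (Set V)} {U : Finset W}
  {C C' Z : Set V} {root : W → V} {M : W → Set V} {k : ℕ} {u : W} {y : V}

/-- A connected vertex set that contains a member of the bramble `𝓑`. -/
def IsLarge (G : SimpleGraph V) (𝓑 : Set (Set V)) (C : Set V) : Prop :=
  (G.induce C).Connected ∧ ∃ B ∈ 𝓑, B ⊆ C

/-- A model of `H[U]` in `G` with branch sets `M u` that avoid a large core `C`, whose neighbourhood
consists of one root from each branch set; no large subset of `C` has a smaller neighbourhood. -/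
structure IsRootedModel (H : SimpleGraph W) (G : SimpleGraph V) (𝓑 : Set (Set V)) (U : Finset W)
    (C : Set V) (root : W → V) (M : W → Set V) : Prop where
  isLarge : IsLarge G 𝓑 C
  root_mem : ∀ u ∈ U, root u ∈ M u
  connected : ∀ u ∈ U, (G.induce (M u)).Connected
  disjoint_core : ∀ u ∈ U, Disjoint (M u) C
  pairwiseDisjoint : (U : Set W).PairwiseDisjoint M
  exists_adj : ∀ u ∈ U, ∀ w ∈ U, H.Adj u w → ∃ x ∈ M u, ∃ x' ∈ M w, G.Adj x x'
  boundary_eq : boundary G C = root '' U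
  card_le : ∀ C' ⊆ C, IsLarge G 𝓑 C' → U.card ≤ (boundary G C').ncard

theorem isLarge_componentIn {D : Set V} {a : V} (hC : IsLarge G 𝓑 C) (hCD : C ⊆ D)
    (ha : a ∈ C) : IsLarge G 𝓑 (componentIn G D a) := by
  obtain ⟨hconn, B, hB, hBC⟩ := hC
  exact ⟨connected_componentIn (hCD ha), B, hB, hBC.trans (subset_componentIn hCD hconn ha)⟩

/-- The component of `C \ Z` that contains `C'` is large, and its boundary lies in `Z`. -/
theorem le_ncard_of_separates_boundary [Finite V] {n : ℕ}
    (hmin : ∀ R ⊆ C, IsLarge G 𝓑 R → n ≤ (boundary G R).ncard) (hC'C : C' ⊆ C)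
    (hC' : IsLarge G 𝓑 C') (hZD : Z ⊆ (C ∪ boundary G C) \ C')
    (hZ : Separates G ((C ∪ boundary G C) \ C') Z (boundary G C) (boundary G C')) :
    n ≤ Z.ncard := by
  obtain ⟨c, hc⟩ := hC'.1.nonempty
  have hC'Z : C' ⊆ C \ Z := fun v hv => ⟨hC'C hv, fun hvZ => (hZD hvZ).2 hv⟩
  set R := componentIn G (C \ Z) c
  have hRC : R ⊆ C \ Z := componentIn_subset
  suffices hRZ : boundary G R ⊆ Z from
    (hmin R (hRC.trans Set.sdiff_subset) (isLarge_componentIn hC' hC'Z hc)).trans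
      (Set.ncard_le_ncard hRZ)
  intro v hv
  by_contra hvZ
  have hvC : v ∉ C := fun hvC => boundary_componentIn_subset hv ⟨hvC, hvZ⟩
  obtain ⟨-, w, hwR, hwv⟩ := hv
  have hvb : v ∈ boundary G C := ⟨hvC, w, (hRC hwR).1, hwv⟩
  obtain ⟨S, hS⟩ := separates_iff_exists_isSide.1 hZ
  have hvS : v ∈ S := (hS.left_subset ⟨hvb, .inr hvb, fun h => hvC (hC'C h)⟩).resolve_right hvZ
  have hP : (G.induce ({v} ∪ R)).Connected :=
    connected_induce_union (connected_induce_singleton v).preconnected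
      (connected_componentIn (hC'Z hc)).preconnected rfl hwR hwv.symm
  have hPS : {v} ∪ R ⊆ S := by
    refine subset_of_connected_of_adj_closed hP (.inl rfl) hvS fun x _ hxS y hy hxy => ?_
    obtain rfl | hyR := hy
    · exact hvS
    · refine hS.closed x hxS y ⟨⟨.inl (hRC hyR).1, fun hyC' => ?_⟩, (hRC hyR).2⟩ hxy
      exact hS.disjoint_right.notMem_of_mem_left hxS ⟨(hS.subset hxS).1.2, y, hyC', hxy.symm⟩
  exact (hS.subset (hPS (.inr (mem_componentIn_self (hC'Z hc))))).1.2 hc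

/-- A bramble of order greater than `k` has a member that avoids `∂C ∪ {y}`; that member lies in
`C`. -/
theorem IsLarge.exists_subset_sdiff_singleton (h𝓑 : IsBramble G 𝓑)
    (hk : ∀ Z : Set V, Covers Z 𝓑 → k < Z.ncard) (hC : IsLarge G 𝓑 C)
    (hcard : (insert y (boundary G C)).ncard ≤ k) :
    ∃ D ⊆ C \ {y}, IsLarge G 𝓑 D ∧ boundary G D ⊆ insert y (boundary G C) := by
  obtain ⟨B, hB, hBZ⟩ : ∃ B ∈ 𝓑, ¬ (insert y (boundary G C) ∩ B).Nonempty := by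
    by_contra! h
    exact (hk _ h).not_ge hcard
  obtain ⟨B₀, hB₀, hB₀C⟩ := hC.2
  obtain ⟨b₀, hb₀⟩ := (h𝓑.connected hB₀).nonempty
  have hBC : B ⊆ C := Set.subset_union_left.trans <|
    subset_of_connected_of_adj_closed (h𝓑 B hB B₀ hB₀) (.inr hb₀) (hB₀C hb₀) <| by
      rintro x - hxC w (hwB | hwB₀) hxw
      · exact by_contra fun hwC => hBZ ⟨w, .inr ⟨hwC, x, hxC, hxw⟩, hwB⟩
      · exact hB₀C hwB₀
  obtain ⟨b, hb⟩ := (h𝓑.connected hB).nonempty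
  have hBy : B ⊆ C \ {y} := fun v hv => ⟨hBC hv, fun hvy => hBZ ⟨v, .inl hvy, hv⟩⟩
  refine ⟨componentIn G (C \ {y}) b, componentIn_subset,
    isLarge_componentIn ⟨h𝓑.connected hB, B, hB, le_rfl⟩ hBy hb, fun v hv => ?_⟩
  by_contra! hvn
  obtain ⟨hvy, hvb⟩ := not_or.1 hvn
  have hvC : v ∉ C := fun hvC => boundary_componentIn_subset hv ⟨hvC, hvy⟩
  obtain ⟨-, w, hw, hwv⟩ := hv
  exact hvb ⟨hvC, w, (componentIn_subset hw).1, hwv⟩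

namespace IsRootedModel

theorem injOn_root (h : IsRootedModel H G 𝓑 U C root M) : Set.InjOn root U :=
  fun u hu w hw huw =>
    h.pairwiseDisjoint.elim_set hu hw _ (h.root_mem u hu) (huw ▸ h.root_mem w hw)

theorem ncard_boundary (h : IsRootedModel H G 𝓑 U C root M) : (boundary G C).ncard = U.card := by
  rw [h.boundary_eq, h.injOn_root.ncard_image, Set.ncard_coe_finset]

theorem exists_mem_core_adj (h : IsRootedModel H G 𝓑 U C root M) (hu : u ∈ U) :
    ∃ c ∈ C, G.Adj c (root u) :=
  (h.boundary_eq.ge (Set.mem_image_of_mem root hu)).2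

/-- Menger's theorem links the old roots to the boundary of a smaller core. -/
theorem exists_of_subset_core [Finite V] (h : IsRootedModel H G 𝓑 U C root M) (hC'C : C' ⊆ C)
    (hC' : IsLarge G 𝓑 C') (hcard : (boundary G C').ncard ≤ U.card) :
    ∃ root' M', IsRootedModel H G 𝓑 U C' root' M' := by
  obtain ⟨P, hdisj, hP⟩ := exists_rooted_isLinkage (G := G) (D := (C ∪ boundary G C) \ C')
    (B := boundary G C') U.finite_toSet (r := root) fun Z hZD hZ => by
      rw [Set.ncard_coe_finset]
      exact le_ncard_of_separates_boundary h.card_le hC'C hC' hZD (h.boundary_eq ▸ hZ)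
  have : Nonempty V := h.isLarge.1.nonempty.map Subtype.val
  choose! hPD hPconn hroot hPB using hP
  choose! root' hroot'B hroot'P using hPB
  have hMP : ∀ u ∈ U, ∀ w ∈ U, u ≠ w → Disjoint (M u) (P w) := fun u hu w hw huw =>
    Set.disjoint_left.2 fun v hvM hvP => by
      have hvC : v ∉ C := (h.disjoint_core u hu).notMem_of_mem_left hvM
      obtain ⟨x, hx, rfl⟩ : v ∈ root '' U :=
        h.boundary_eq ▸ (hPD w hw hvP).1.resolve_left hvC
      have hux : u = x := h.pairwiseDisjoint.elim_set hu hx _ hvM (h.root_mem x hx)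
      exact huw (hux.trans (hdisj.elim_set hx hw _ (hroot x hx) hvP))
  have hMP' : (U : Set W).PairwiseDisjoint fun u => M u ∪ P u := fun u hu w hw huw => by
    simp only [Function.onFun, Set.disjoint_union_left, Set.disjoint_union_right]
    exact ⟨⟨h.pairwiseDisjoint hu hw huw, (hMP w hw u hu huw.symm).symm⟩, hMP u hu w hw huw,
      hdisj hu hw huw⟩
  have hinj : Set.InjOn root' U := fun u hu w hw huw =>
    hdisj.elim_set hu hw _ (hroot'P u hu) (huw ▸ hroot'P w hw)
  exact ⟨root', fun u => M u ∪ P u,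
    { isLarge := hC'
      root_mem := fun u hu => .inr (hroot'P u hu)
      connected := fun u hu => induce_union_connected (h.connected u hu).preconnected
        (hPconn u hu).preconnected ⟨root u, h.root_mem u hu, hroot u hu⟩
      disjoint_core := fun u hu => ((h.disjoint_core u hu).mono_right hC'C).union_left
        (Set.disjoint_left.2 fun v hv => (hPD u hu hv).2)
      pairwiseDisjoint := hMP'
      exists_adj := fun u hu w hw huw => by
        obtain ⟨x, hx, x', hx', hxx'⟩ := h.exists_adj u hu w hw huw
        exact ⟨x, .inl hx, x', .inl hx', hxx'⟩
      boundary_eq := .symm <| Set.eq_of_subset_of_ncard_le (Set.image_subset_iff.2 hroot'B)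
        (by rwa [hinj.ncard_image, Set.ncard_coe_finset])
      card_le := fun R hR => h.card_le R (hR.trans hC'C) }⟩

theorem extend [DecidableEq W] (h : IsRootedModel H G 𝓑 U C root M) (hu : u ∉ U) (hy : y ∈ C)
    (hadj : ∀ w ∈ U, H.Adj u w → G.Adj y (root w)) (hC' : IsLarge G 𝓑 C') (hC'C : C' ⊆ C \ {y})
    (hboundary : boundary G C' = insert y (boundary G C))
    (hmin : ∀ R ⊆ C', IsLarge G 𝓑 R → U.card < (boundary G R).ncard) :
    IsRootedModel H G 𝓑 (insert u U) C' (Function.update root u y) (Function.update M u {y}) := by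
  have hroot : ∀ w ∈ U, Function.update root u y w = root w := fun w hw =>
    Function.update_of_ne (ne_of_mem_of_not_mem hw hu) _ _
  have hM : ∀ w ∈ U, Function.update M u {y} w = M w := fun w hw =>
    Function.update_of_ne (ne_of_mem_of_not_mem hw hu) _ _
  have hyM : ∀ w ∈ U, y ∉ M w := fun w hw => (h.disjoint_core w hw).notMem_of_mem_right hy
  refine ⟨hC', ?_, ?_, ?_, ?_, ?_, ?_, ?_⟩
  · simpa +contextual [hroot, hM] using h.root_mem
  · refine Finset.forall_mem_insert _ _ _ |>.2 ⟨?_, fun w hw => hM w hw ▸ h.connected w hw⟩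
    exact (Function.update_self u {y} M).symm ▸ connected_induce_singleton y
  · refine Finset.forall_mem_insert _ _ _ |>.2 ⟨?_, fun w hw => ?_⟩
    · simpa using fun hyC' => (hC'C hyC').2 rfl
    · exact hM w hw ▸ (h.disjoint_core w hw).mono_right (hC'C.trans Set.sdiff_subset)
  · rw [Finset.coe_insert, Set.pairwiseDisjoint_insert_of_notMem hu]
    refine ⟨fun v hv w hw hvw => ?_, fun w hw => ?_⟩
    · simpa [Function.onFun, hM v hv, hM w hw] using h.pairwiseDisjoint hv hw hvw
    · simpa [hM w hw] using hyM w hw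
  · simp only [Finset.forall_mem_insert, SimpleGraph.irrefl, false_implies, true_and,
      Function.update_self, Set.mem_singleton_iff, exists_eq_left]
    refine ⟨fun w hw huw => ⟨root w, hM w hw ▸ h.root_mem w hw, hadj w hw huw⟩, fun v hv =>
      ⟨fun hvu => ⟨root v, hM v hv ▸ h.root_mem v hv, (hadj v hv hvu.symm).symm⟩, fun w hw => ?_⟩⟩
    rw [hM v hv, hM w hw]
    exact h.exists_adj v hv w hw
  · rw [hboundary, h.boundary_eq, Finset.coe_insert, Set.image_insert_eq, Function.update_self,
      Set.image_congr hroot]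
  · rw [Finset.card_insert_of_notMem hu]
    exact hmin

theorem exists_mem_core_forall_adj_root (h : IsRootedModel H G 𝓑 U C root M)
    (hu : (H.neighborSet u ∩ U).Subsingleton) :
    ∃ y ∈ C, ∀ w ∈ U, H.Adj u w → G.Adj y (root w) := by
  by_cases hq : ∃ q ∈ U, H.Adj u q
  · obtain ⟨q, hq, huq⟩ := hq
    obtain ⟨y, hy, hyq⟩ := h.exists_mem_core_adj hq
    exact ⟨y, hy, fun w hw huw => hu ⟨huq, hq⟩ ⟨huw, hw⟩ ▸ hyq⟩
  · push Not at hq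
    obtain ⟨y, hy⟩ := h.isLarge.1.nonempty
    exact ⟨y, hy, fun w hw huw => (hq w hw huw).elim⟩

/-- The new branch set is a vertex `y` of the core next to the root of the neighbour of `u`. If
avoiding `y` allows a boundary as small as the present one, the core is shrunk first. -/
theorem exists_insert [Finite V] [DecidableEq W] (h𝓑 : IsBramble G 𝓑)
    (hk : ∀ Z : Set V, Covers Z 𝓑 → k < Z.ncard) (hUk : U.card < k) (huU : u ∉ U)
    (hu : (H.neighborSet u ∩ U).Subsingleton) (h : IsRootedModel H G 𝓑 U C root M) :
    ∃ C root M, IsRootedModel H G 𝓑 (insert u U) C root M := by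
  induction C using WellFoundedLT.induction generalizing root M with | ind C ih
  obtain ⟨y, hyC, hadj⟩ := h.exists_mem_core_forall_adj_root hu
  by_cases hmin : ∀ R ⊆ C \ {y}, IsLarge G 𝓑 R → U.card < (boundary G R).ncard
  · have hcard : (insert y (boundary G C)).ncard ≤ U.card + 1 :=
      h.ncard_boundary ▸ Set.ncard_insert_le _ _
    obtain ⟨D, hDC, hD, hDb⟩ :=
      h.isLarge.exists_subset_sdiff_singleton h𝓑 hk (hcard.trans hUk)
    have hDb' : boundary G D = insert y (boundary G C) :=
      Set.eq_of_subset_of_ncard_le hDb (hcard.trans (hmin D hDC hD))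
    exact ⟨D, _, _, h.extend huU hyC hadj hD hDC hDb' fun R hR => hmin R (hR.trans hDC)⟩
  · push Not at hmin
    obtain ⟨C', hC', hlarge, hcard⟩ := hmin
    have hC'C : C' < C :=
      (hC'.trans Set.sdiff_subset).lt_of_not_ge fun hle => (hC' (hle hyC)).2 rfl
    obtain ⟨root', M', h'⟩ := h.exists_of_subset_core hC'C.le hlarge hcard
    exact ih C' hC'C h'

theorem isMinor [Fintype W] [DecidableEq W] {v : W}
    (h : IsRootedModel H G 𝓑 (Finset.univ.erase v) C root M) : IsMinor H G := by
  have hU : ∀ {w}, w ≠ v → w ∈ Finset.univ.erase v := fun hw => by simp [hw]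
  have hconn : ∀ w, (G.induce (Function.update M v C w)).Connected := fun w => by
    obtain rfl | hw := eq_or_ne w v
    · exact (Function.update_self w C M).symm ▸ h.isLarge.1
    · exact (Function.update_of_ne hw C M).symm ▸ h.connected w (hU hw)
  have hcore : ∀ {w}, H.Adj v w → ∃ c ∈ C, ∃ x ∈ M w, G.Adj c x := fun {w} hvw => by
    obtain ⟨c, hc, hcw⟩ := h.exists_mem_core_adj (hU hvw.ne')
    exact ⟨c, hc, root w, h.root_mem w (hU hvw.ne'), hcw⟩
  refine ⟨Function.update M v C, fun w => Set.nonempty_coe_sort.1 (hconn w).nonempty,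
    fun w w' hne => ?_, hconn, fun w w' hadj => ?_⟩
  · obtain rfl | hw := eq_or_ne w v
    · simpa [hne.symm] using (h.disjoint_core w' (hU hne.symm)).symm
    obtain rfl | hw' := eq_or_ne w' v
    · simpa [hw] using h.disjoint_core w (hU hw)
    · simpa [hw, hw'] using h.pairwiseDisjoint (hU hw) (hU hw') hne
  · obtain rfl | hw := eq_or_ne w v
    · simpa [hadj.ne'] using hcore hadj
    obtain rfl | hw' := eq_or_ne w' v
    · obtain ⟨c, hc, x, hx, hcx⟩ := hcore hadj.symm
      simpa [hw] using ⟨x, hx, c, hc, hcx.symm⟩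
    · simpa [hw, hw'] using h.exists_adj w (hU hw) w' (hU hw') hadj

end IsRootedModel

theorem exists_subsingleton_neighborSet_inter [Nonempty U] (hU : (H.induce U).IsAcyclic) :
    ∃ u ∈ U, (H.neighborSet u ∩ U).Subsingleton := by
  obtain ⟨a, b, p, hp, hmax⟩ :=
    Walk.exists_isPath_forall_isPath_length_le_length (H.induce (U : Set W))
  have hpen : ∀ w, (H.induce (U : Set W)).Adj b w → w = p.penultimate := fun w hbw =>
    hU.eq_penultimate_of_adj_end hp hbw <| by
      by_contra hw
      simpa using hmax _ _ _ (hp.concat hw hbw)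
  exact ⟨b, b.2, fun q hq q' hq' => congrArg Subtype.val
    ((hpen ⟨q, hq.2⟩ hq.1).trans (hpen ⟨q', hq'.2⟩ hq'.1).symm)⟩

theorem IsBramble.exists_isRootedModel [Finite V] (h𝓑 : IsBramble G 𝓑)
    (hk : ∀ Z : Set V, Covers Z 𝓑 → k < Z.ncard) (hU : (H.induce U).IsAcyclic) (hUk : U.card ≤ k) :
    ∃ C root M, IsRootedModel H G 𝓑 U C root M := by
  classical
  induction hn : U.card generalizing U with
  | zero =>
    obtain rfl := Finset.card_eq_zero.1 hn
    obtain ⟨B, hB⟩ : 𝓑.Nonempty := Set.nonempty_iff_ne_empty.2 fun h => by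
      simpa using hk ∅ fun B hB => (h ▸ hB : B ∈ (∅ : Set (Set V))).elim
    obtain ⟨b, hb⟩ := (h𝓑.connected hB).nonempty
    have hlarge : IsLarge G 𝓑 (componentIn G Set.univ b) :=
      isLarge_componentIn ⟨h𝓑.connected hB, B, hB, le_rfl⟩ (Set.subset_univ _) hb
    have hboundary : boundary G (componentIn G Set.univ b) = ∅ :=
      Set.subset_empty_iff.1 (boundary_componentIn_subset.trans Set.compl_univ.le)
    exact ⟨_, fun _ => b, fun _ => ∅, hlarge, by simp, by simp, by simp, by simp, by simp,
      by simpa using hboundary, by simp⟩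
  | succ n ih =>
    have : Nonempty U := (Finset.card_pos.1 (by omega)).to_subtype
    obtain ⟨u, hu, hsub⟩ := exists_subsingleton_neighborSet_inter hU
    have hcard : (U.erase u).card = n := by rw [Finset.card_erase_of_mem hu, hn, Nat.add_sub_cancel]
    have hle : (U.erase u : Set W) ⊆ U := Finset.coe_subset.2 (U.erase_subset u)
    obtain ⟨C, root, M, h⟩ := ih (hU.embedding (induceHomOfLE H hle)) (by omega) hcard
    have := h.exists_insert h𝓑 hk (by omega) (U.notMem_erase u)
      (hsub.anti (Set.inter_subset_inter_right _ hle))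
    rwa [Finset.insert_erase hu] at this

end RootedModels

section Treewidth

variable {V W : Type*} {G : SimpleGraph V} {H : SimpleGraph W}

theorem IsBramble.isMinor_of_isAcyclic_induce [Finite V] [Fintype W] {𝓑 : Set (Set V)}
    (h𝓑 : IsBramble G 𝓑) (hcard : ∀ Z : Set V, Covers Z 𝓑 → Fintype.card W ≤ Z.ncard) {v : W}
    (hv : (H.induce {w | w ≠ v}).IsAcyclic) : IsMinor H G := by
  classical
  have hU : (Finset.univ.erase v : Set W) = {w | w ≠ v} := by
    ext w
    simp
  have hlt : (Finset.univ.erase v).card < Fintype.card W :=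
    Finset.card_erase_lt_of_mem (Finset.mem_univ v)
  obtain ⟨C, root, M, h⟩ := h𝓑.exists_isRootedModel (U := Finset.univ.erase v)
    (fun Z hZ => hlt.trans_le (hcard Z hZ)) (hU ▸ hv) le_rfl
  exact h.isMinor

theorem treewidth_le_of_not_isMinor [Finite V] [Fintype W] (hW : 2 ≤ Fintype.card W)
    (hH : ∃ v, (H.induce {w | w ≠ v}).IsAcyclic) (hG : ¬ IsMinor H G) :
    treewidth G ≤ Fintype.card W - 2 := by
  obtain ⟨v, hv⟩ := hH
  obtain ⟨D, hD⟩ := exists_treeDecomp_card_le (G := G) (k := Fintype.card W - 1) fun 𝓑 h𝓑 => by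
    by_contra! h
    refine hG (h𝓑.isMinor_of_isAcyclic_induce (fun Z hZ => ?_) hv)
    have := h (Set.toFinite Z).toFinset (by simpa using hZ)
    rw [← Set.ncard_eq_toFinset_card] at this
    omega
  exact Nat.sInf_le ⟨D, fun t => (hD t).trans (by omega)⟩

theorem isAcyclic_completeBipartiteGraph_induce_ne (α : Type*) :
    ((completeBipartiteGraph (Fin 2) α).induce {w | w ≠ .inl 0}).IsAcyclic := by
  refine (isAcyclic_starGraph ⟨.inl 1, by simp⟩).anti ?_
  have hcenter : ∀ (i : Fin 2) (hi : (.inl i : Fin 2 ⊕ α) ∈ {w | w ≠ .inl 0}),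
      (⟨.inl i, hi⟩ : {w : Fin 2 ⊕ α | w ≠ .inl 0}) = ⟨.inl 1, by simp⟩ := fun i hi => by
    simpa using Fin.eq_one_of_ne_zero i (by simpa using hi)
  rintro ⟨a | a, ha⟩ ⟨b | b, hb⟩ hab
  · simp at hab
  · exact starGraph_adj.2 ⟨hab.ne, .inl (hcenter a ha)⟩
  · exact starGraph_adj.2 ⟨hab.ne, .inr (hcenter b hb)⟩
  · simp at hab

end Treewidth

/-- For any apex-forest `H` (a graph with a vertex whose deletion leaves a forest) with
`|V(H)| ≥ 2`, every `H`-minor-free graph has treewidth at most `|V(H)| − 2`. In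
particular, every `K_{2,n}`-minor-free graph has treewidth at most `n`. -/
theorem apex_forest_minor_free_treewidth {V : Type*} [Fintype V] (G : SimpleGraph V) :
    (∀ (W : Type) [Fintype W] (H : SimpleGraph W), 2 ≤ Fintype.card W →
      (∃ v : W, (H.induce {w : W | w ≠ v}).IsAcyclic) →
      ¬ IsMinor H G → treewidth G ≤ Fintype.card W - 2) ∧
    (∀ n : ℕ, ¬ IsMinor (completeBipartiteGraph (Fin 2) (Fin n)) G →
      treewidth G ≤ n) := by
  refine ⟨fun W _ H hW hH hG => treewidth_le_of_not_isMinor hW hH hG, fun n hG => ?_⟩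
  simpa using treewidth_le_of_not_isMinor (by simp)
    ⟨.inl 0, isAcyclic_completeBipartiteGraph_induce_ne (Fin n)⟩ hG
end
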